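/- arXiv:1303.2713 — 3 statements merged into one kernel-verified Lean document; each statement's English description precedes it below -/
import Mathlib

section
/- For the focusing ground state $\phi_\mu$ one has $\int_0^1 \phi_\mu(x)^2\,dx = 8 K(k)\big(E(k) - (1-k^2)K(k)\big)$, where $k=k(\mu)\in[0,1)$ is the unique solution of $\mu = 4(2k^2-1)K(k)^2$ and $K, E$ are the complete elliptic integrals of the first and second kind. -/
open Set

/-- Complete elliptic integral of the first kind. -/
noncomputable def ellK (k : ℝ) : ℝ :=
  ∫ θ in (0:ℝ)..(Real.pi / 2), 1 / Real.sqrt (1 - k ^ 2 * Real.sin θ ^ 2)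

/-- Complete elliptic integral of the second kind. -/
noncomputable def ellE (k : ℝ) : ℝ :=
  ∫ θ in (0:ℝ)..(Real.pi / 2), Real.sqrt (1 - k ^ 2 * Real.sin θ ^ 2)

/-- The focusing ground state predicate. -/
def IsGroundState (μ : ℝ) (φ : ℝ → ℝ) : Prop :=
  ∃ φ' φ'' φ''' : ℝ → ℝ,
    (∀ x ∈ Set.Icc (0:ℝ) 1, HasDerivAt φ (φ' x) x ∧ HasDerivAt φ' (φ'' x) x ∧
      HasDerivAt φ'' (φ''' x) x) ∧
    ContinuousOn φ''' (Set.Icc 0 1) ∧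
    φ 0 = 0 ∧ φ 1 = 0 ∧
    (∀ x ∈ Set.Ioo (0:ℝ) 1, 0 < φ x) ∧
    (∀ x ∈ Set.Icc (0:ℝ) 1, φ'' x + φ x ^ 3 = μ * φ x)

/-! Conservation of energy reads `φ'² = (2ω²m² - φ²) (ω²(1 - m²) + φ²/2)` for a frequency `ω` and a
modulus `m` with `μ = ω²(2m² - 1)`. In terms of the phase `T` with `T' = √(ω²(1 - m²) + φ²/2)` and
`T = 0` at the left endpoint, the pair `(φ, φ' / T')` rotates at unit speed, so that
`φ = √2 ω m sin T` and `T' = ω √(1 - m² cos² T)`. Positivity of `φ` and the boundary values force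
`T` to run from `0` to `π`, and the substitution `s = T x` turns the length of the interval and
`∫ φ²` into complete elliptic integrals of modulus `m`. The length determines `m`, because
`(2k² - 1) K(k)² = k² K(k)² - (1 - k²) K(k)²` is strictly increasing in `k`. -/

/-! ### Complete elliptic integrals -/

section EllipticIntegrals

variable {k : ℝ}

lemma one_sub_sq_mul_pos (hk : k ^ 2 < 1) {c : ℝ} (hc : c ≤ 1) : 0 < 1 - k ^ 2 * c := by
  nlinarith [sq_nonneg k]

lemma one_sub_sq_mul_sin_sq_pos (hk : k ^ 2 < 1) (θ : ℝ) : 0 < 1 - k ^ 2 * Real.sin θ ^ 2 :=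
  one_sub_sq_mul_pos hk (Real.sin_sq_le_one θ)

lemma one_sub_sq_mul_cos_sq_pos (hk : k ^ 2 < 1) (θ : ℝ) : 0 < 1 - k ^ 2 * Real.cos θ ^ 2 :=
  one_sub_sq_mul_pos hk (Real.cos_sq_le_one θ)

lemma continuous_one_div_sqrt_one_sub_sq_mul_sin_sq (hk : k ^ 2 < 1) :
    Continuous fun θ : ℝ => 1 / √(1 - k ^ 2 * Real.sin θ ^ 2) :=
  continuous_const.div (by fun_prop) fun θ =>
    (Real.sqrt_pos.2 (one_sub_sq_mul_sin_sq_pos hk θ)).ne'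

lemma ellK_pos (hk : k ^ 2 < 1) : 0 < ellK k :=
  intervalIntegral.intervalIntegral_pos_of_pos_on
    ((continuous_one_div_sqrt_one_sub_sq_mul_sin_sq hk).intervalIntegrable _ _)
    (fun θ _ => one_div_pos.2 (Real.sqrt_pos.2 (one_sub_sq_mul_sin_sq_pos hk θ))) (by positivity)

lemma sq_lt_one_of_mem_Ico (hk : k ∈ Ico (0 : ℝ) 1) : k ^ 2 < 1 :=
  pow_lt_one₀ hk.1 hk.2 two_ne_zero

lemma monotoneOn_ellK : MonotoneOn ellK (Ico 0 1) := by
  intro k hk l hl hkl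
  have hk₁ := sq_lt_one_of_mem_Ico hk
  have hl₁ := sq_lt_one_of_mem_Ico hl
  refine intervalIntegral.integral_mono_on (by positivity)
    ((continuous_one_div_sqrt_one_sub_sq_mul_sin_sq hk₁).intervalIntegrable _ _)
    ((continuous_one_div_sqrt_one_sub_sq_mul_sin_sq hl₁).intervalIntegrable _ _) fun θ _ => ?_
  have hl_pos : 0 < √(1 - l ^ 2 * Real.sin θ ^ 2) :=
    Real.sqrt_pos.2 (one_sub_sq_mul_sin_sq_pos hl₁ θ)
  have hk₀ := hk.1
  gcongr

lemma antitoneOn_sqrt_one_sub_sq_mul_ellK :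
    AntitoneOn (fun k => √(1 - k ^ 2) * ellK k) (Ico 0 1) := by
  intro k hk l hl hkl
  have hk₁ := sq_lt_one_of_mem_Ico hk
  have hl₁ := sq_lt_one_of_mem_Ico hl
  have hsq : k ^ 2 ≤ l ^ 2 := pow_le_pow_left₀ hk.1 hkl 2
  simp only [ellK, ← intervalIntegral.integral_const_mul, mul_one_div]
  refine intervalIntegral.integral_mono_on (by positivity)
    (Continuous.intervalIntegrable ?_ _ _) (Continuous.intervalIntegrable ?_ _ _) fun θ _ => ?_
  · simpa only [mul_one_div] using
      (continuous_one_div_sqrt_one_sub_sq_mul_sin_sq hl₁).const_mul (√(1 - l ^ 2))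
  · simpa only [mul_one_div] using
      (continuous_one_div_sqrt_one_sub_sq_mul_sin_sq hk₁).const_mul (√(1 - k ^ 2))
  rw [← Real.sqrt_div (by linarith), ← Real.sqrt_div (by linarith)]
  apply Real.sqrt_le_sqrt
  rw [div_le_div_iff₀ (one_sub_sq_mul_sin_sq_pos hl₁ θ) (one_sub_sq_mul_sin_sq_pos hk₁ θ)]
  linarith [mul_nonneg (sub_nonneg.2 hsq) (sub_nonneg.2 (Real.sin_sq_le_one θ))]

lemma strictMonoOn_two_mul_sq_sub_one_mul_ellK_sq :
    StrictMonoOn (fun k => (2 * k ^ 2 - 1) * ellK k ^ 2) (Ico 0 1) := by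
  intro k hk l hl hkl
  have hk₁ := sq_lt_one_of_mem_Ico hk
  have hl₁ := sq_lt_one_of_mem_Ico hl
  have hKk := ellK_pos hk₁
  have hincr : (k * ellK k) ^ 2 < (l * ellK l) ^ 2 := by
    refine pow_lt_pow_left₀ ?_ (mul_nonneg hk.1 hKk.le) two_ne_zero
    exact mul_lt_mul hkl (monotoneOn_ellK hk hl hkl.le) hKk hl.1
  have hdecr : (√(1 - l ^ 2) * ellK l) ^ 2 ≤ (√(1 - k ^ 2) * ellK k) ^ 2 :=
    pow_le_pow_left₀ (mul_nonneg (Real.sqrt_nonneg _) (ellK_pos hl₁).le)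
      (antitoneOn_sqrt_one_sub_sq_mul_ellK hk hl hkl.le) 2
  simp only [mul_pow, Real.sq_sqrt (sub_nonneg.2 hk₁.le), Real.sq_sqrt (sub_nonneg.2 hl₁.le)]
    at hincr hdecr
  linarith

lemma ellE_sub_one_sub_sq_mul_ellK (hk : k ^ 2 < 1) :
    ellE k - (1 - k ^ 2) * ellK k =
      ∫ θ in (0 : ℝ)..(Real.pi / 2),
        k ^ 2 * (1 - Real.sin θ ^ 2) / √(1 - k ^ 2 * Real.sin θ ^ 2) := by
  rw [ellE, ellK, ← intervalIntegral.integral_const_mul, ← intervalIntegral.integral_sub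
    (Continuous.intervalIntegrable (by fun_prop) _ _)
    (((continuous_one_div_sqrt_one_sub_sq_mul_sin_sq hk).const_mul _).intervalIntegrable _ _)]
  refine intervalIntegral.integral_congr fun θ _ => ?_
  have hpos := one_sub_sq_mul_sin_sq_pos hk θ
  have := Real.sqrt_pos.2 hpos
  field_simp
  rw [Real.sq_sqrt hpos.le]
  ring

lemma integral_comp_cos_sq_zero_pi {E : Type*} [NormedAddCommGroup E] [NormedSpace ℝ E]
    {F : ℝ → E} (hF : Continuous fun s => F (Real.cos s ^ 2)) :
    ∫ s in (0 : ℝ)..Real.pi, F (Real.cos s ^ 2) =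
      (2 : ℝ) • ∫ s in (0 : ℝ)..(Real.pi / 2), F (Real.sin s ^ 2) := by
  have hleft : ∫ s in (0 : ℝ)..(Real.pi / 2), F (Real.cos s ^ 2) =
      ∫ s in (0 : ℝ)..(Real.pi / 2), F (Real.sin s ^ 2) := by
    have hreflect := intervalIntegral.integral_comp_sub_left (a := 0) (b := Real.pi / 2)
      (fun s => F (Real.cos s ^ 2)) (Real.pi / 2)
    simpa [Real.cos_pi_div_two_sub] using hreflect.symm
  have hright : ∫ s in (Real.pi / 2)..Real.pi, F (Real.cos s ^ 2) =
      ∫ s in (0 : ℝ)..(Real.pi / 2), F (Real.sin s ^ 2) := by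
    have hshift := intervalIntegral.integral_comp_add_right (a := 0) (b := Real.pi / 2)
      (fun s => F (Real.cos s ^ 2)) (Real.pi / 2)
    simpa [Real.cos_add_pi_div_two] using hshift.symm
  rw [← intervalIntegral.integral_add_adjacent_intervals (b := Real.pi / 2)
    (hF.intervalIntegrable _ _) (hF.intervalIntegrable _ _), hleft, hright, two_smul]

lemma integral_one_div_sqrt_one_sub_sq_mul_cos_sq (hk : k ^ 2 < 1) :
    ∫ s in (0 : ℝ)..Real.pi, 1 / √(1 - k ^ 2 * Real.cos s ^ 2) = 2 * ellK k :=
  integral_comp_cos_sq_zero_pi (F := fun c => 1 / √(1 - k ^ 2 * c)) <|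
    continuous_const.div (by fun_prop) fun s =>
      (Real.sqrt_pos.2 (one_sub_sq_mul_cos_sq_pos hk s)).ne'

lemma integral_sq_mul_sin_sq_div_sqrt_one_sub_sq_mul_cos_sq (hk : k ^ 2 < 1) :
    ∫ s in (0 : ℝ)..Real.pi, k ^ 2 * Real.sin s ^ 2 / √(1 - k ^ 2 * Real.cos s ^ 2) =
      2 * (ellE k - (1 - k ^ 2) * ellK k) := by
  have hcont : Continuous fun s : ℝ =>
      k ^ 2 * (1 - Real.cos s ^ 2) / √(1 - k ^ 2 * Real.cos s ^ 2) :=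
    Continuous.div (by fun_prop) (by fun_prop) fun s =>
      (Real.sqrt_pos.2 (one_sub_sq_mul_cos_sq_pos hk s)).ne'
  rw [ellE_sub_one_sub_sq_mul_ellK hk]
  simpa only [← Real.sin_sq, smul_eq_mul] using
    integral_comp_cos_sq_zero_pi (F := fun c => k ^ 2 * (1 - c) / √(1 - k ^ 2 * c)) hcont

end EllipticIntegrals

/-! ### Calculus on a compact interval -/

section Calculus

variable {a b : ℝ}

lemma eq_left_of_hasDerivWithinAt_zero {E : Type*} [NormedAddCommGroup E] [NormedSpace ℝ E]
    {f : ℝ → E} (hf : ∀ x ∈ Icc a b, HasDerivWithinAt f 0 (Icc a b) x) :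
    ∀ x ∈ Icc a b, f x = f a :=
  constant_of_has_deriv_right_zero (fun x hx => (hf x hx).continuousWithinAt) fun x hx =>
    (hf x (Ico_subset_Icc_self hx)).mono_of_mem_nhdsWithin (Icc_mem_nhdsGE_of_mem hx)

lemma hasDerivWithinAt_integral_Icc {E : Type*} [NormedAddCommGroup E] [NormedSpace ℝ E]
    [CompleteSpace E] {g : ℝ → E} (hg : ContinuousOn g (Icc a b)) {x : ℝ}
    (hx : x ∈ Icc a b) :
    HasDerivWithinAt (fun u => ∫ t in a..u, g t) (g x) (Icc a b) x := by
  have : Fact (x ∈ Icc a b) := ⟨hx⟩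
  refine intervalIntegral.integral_hasDerivWithinAt_right ?_
    (hg.stronglyMeasurableAtFilter_nhdsWithin measurableSet_Icc x) (hg x hx)
  exact (hg.mono (Icc_subset_Icc_right hx.2)).intervalIntegrable_of_Icc hx.1

lemma eq_rotation_of_hasDerivWithinAt {u w T g : ℝ → ℝ}
    (hu : ∀ x ∈ Icc a b, HasDerivWithinAt u (w x * g x) (Icc a b) x)
    (hw : ∀ x ∈ Icc a b, HasDerivWithinAt w (-(u x * g x)) (Icc a b) x)
    (hT : ∀ x ∈ Icc a b, HasDerivWithinAt T (g x) (Icc a b) x) :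
    ∀ x ∈ Icc a b, u x = u a * Real.cos (T x - T a) + w a * Real.sin (T x - T a) := by
  intro x hx
  have hfst := eq_left_of_hasDerivWithinAt_zero
    (f := fun x => u x * Real.cos (T x) - w x * Real.sin (T x))
    (fun x hx => (((hu x hx).mul (hT x hx).cos).sub ((hw x hx).mul (hT x hx).sin)).congr_deriv
      (by ring)) x hx
  have hsnd := eq_left_of_hasDerivWithinAt_zero
    (f := fun x => u x * Real.sin (T x) + w x * Real.cos (T x))
    (fun x hx => (((hu x hx).mul (hT x hx).sin).add ((hw x hx).mul (hT x hx).cos)).congr_deriv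
      (by ring)) x hx
  rw [Real.cos_sub, Real.sin_sub]
  linear_combination Real.cos (T x) * hfst + Real.sin (T x) * hsnd
    - u x * Real.sin_sq_add_cos_sq (T x)

lemma eq_pi_of_sin_pos_of_sin_eq_zero {T : ℝ → ℝ} (hab : a ≤ b) (hT : ContinuousOn T (Icc a b))
    (ha : T a = 0) (hb : 0 < T b) (hpos : ∀ x ∈ Ioo a b, 0 < Real.sin (T x))
    (hsin : Real.sin (T b) = 0) : T b = Real.pi := by
  refine le_antisymm (not_lt.1 fun hlt => ?_) (not_lt.1 fun hlt => ?_)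
  · obtain ⟨x, hx, hTx⟩ := intermediate_value_Ioo hab hT ⟨ha ▸ Real.pi_pos, hlt⟩
    simpa [hTx] using hpos x hx
  · exact (Real.sin_pos_of_pos_of_lt_pi hb hlt).ne' hsin

end Calculus

/-! ### Phase functions of the pendulum equation -/

/-- `T` solves the first-order pendulum equation `T' = ω √(1 - m² cos² T)` on `[a, b]`, with
derivatives taken within `[a, b]`. The angle is a quarter turn ahead of the Jacobi amplitude, for
which `sin` replaces `cos`. -/
def IsPendulumPhase (ω m a b : ℝ) (T : ℝ → ℝ) : Prop :=
  ∀ x ∈ Icc a b, HasDerivWithinAt T (ω * √(1 - m ^ 2 * Real.cos (T x) ^ 2)) (Icc a b) x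

namespace IsPendulumPhase

variable {ω m a b : ℝ} {T : ℝ → ℝ}

lemma mul_integral_comp (hT : IsPendulumPhase ω m a b T) (hm : m ^ 2 < 1) (hab : a ≤ b)
    {F : ℝ → ℝ} (hF : Continuous F) :
    ω * ∫ x in a..b, F (T x) =
      ∫ s in T a..T b, F s / √(1 - m ^ 2 * Real.cos s ^ 2) := by
  have hsqrt (s : ℝ) : √(1 - m ^ 2 * Real.cos s ^ 2) ≠ 0 :=
    (Real.sqrt_pos.2 (one_sub_sq_mul_cos_sq_pos hm s)).ne'
  have hT_cont : ContinuousOn T (Icc a b) := fun x hx => (hT x hx).continuousWithinAt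
  have hsubst := intervalIntegral.integral_comp_mul_deriv'' (a := a) (b := b) (f := T)
    (g := fun s => F s / √(1 - m ^ 2 * Real.cos s ^ 2))
    (by rwa [uIcc_of_le hab])
    (fun x hx => by
      rw [min_eq_left hab, max_eq_right hab] at hx
      exact (hT x (Ioo_subset_Icc_self hx)).mono_of_mem_nhdsWithin
        (Icc_mem_nhdsGT_of_mem (Ioo_subset_Ico_self hx)))
    (by rw [uIcc_of_le hab]; fun_prop)
    (hF.div (by fun_prop) hsqrt).continuousOn
  rw [← hsubst, ← intervalIntegral.integral_const_mul]
  refine intervalIntegral.integral_congr fun x _ => ?_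
  have := hsqrt (T x)
  simp only [Function.comp_apply]
  field_simp

lemma mul_sub_eq_two_mul_ellK (hT : IsPendulumPhase ω m a b T) (hm : m ^ 2 < 1) (hab : a ≤ b)
    (ha : T a = 0) (hb : T b = Real.pi) : ω * (b - a) = 2 * ellK m := by
  rw [← integral_one_div_sqrt_one_sub_sq_mul_cos_sq hm, ← ha, ← hb,
    ← hT.mul_integral_comp hm hab continuous_const]
  simp

lemma mul_integral_sq_mul_sin_sq (hT : IsPendulumPhase ω m a b T) (hm : m ^ 2 < 1) (hab : a ≤ b)
    (ha : T a = 0) (hb : T b = Real.pi) :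
    ω * ∫ x in a..b, m ^ 2 * Real.sin (T x) ^ 2 = 2 * (ellE m - (1 - m ^ 2) * ellK m) := by
  rw [hT.mul_integral_comp (F := fun s => m ^ 2 * Real.sin s ^ 2) hm hab (by fun_prop), ha, hb,
    integral_sq_mul_sin_sq_div_sqrt_one_sub_sq_mul_cos_sq hm]

end IsPendulumPhase

/-! ### The focusing equation -/

/-- `φ` solves `φ'' + φ³ = μ φ` on `[a, b]`, with first derivative `φ'`. Derivatives are taken
within `[a, b]`, hence one-sided at the endpoints. -/
structure IsFocusingSolution (μ a b : ℝ) (φ φ' : ℝ → ℝ) : Prop where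
  hasDerivWithinAt : ∀ x ∈ Icc a b, HasDerivWithinAt φ (φ' x) (Icc a b) x
  hasDerivWithinAt_deriv :
    ∀ x ∈ Icc a b, HasDerivWithinAt φ' (μ * φ x - φ x ^ 3) (Icc a b) x

/-- A solution of the focusing equation on `[a, b]` that is positive inside and vanishes at both
endpoints: the ground state of an arbitrary interval, with its first derivative `φ'`. -/
structure IsPositiveDirichletSolution (μ a b : ℝ) (φ φ' : ℝ → ℝ) : Prop
    extends IsFocusingSolution μ a b φ φ' where
  left_eq_zero : φ a = 0
  right_eq_zero : φ b = 0
  pos : ∀ x ∈ Ioo a b, 0 < φ x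

lemma IsGroundState.exists_isPositiveDirichletSolution {μ : ℝ} {φ : ℝ → ℝ}
    (hφ : IsGroundState μ φ) : ∃ φ', IsPositiveDirichletSolution μ 0 1 φ φ' := by
  obtain ⟨φ', φ'', _, hderiv, -, h₀, h₁, hpos, hode⟩ := hφ
  refine ⟨φ', ⟨fun x hx => (hderiv x hx).1.hasDerivWithinAt, fun x hx => ?_⟩, h₀, h₁, hpos⟩
  exact (hderiv x hx).2.1.hasDerivWithinAt.congr_deriv (by linarith [hode x hx])

/-- The speed `√(ω²(1 - m²) + φ²/2)` at which the phase of a solution `φ` with frequency `ω` and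
modulus `m` advances; it is the second factor of the energy identity. -/
noncomputable def phaseSpeed (ω m : ℝ) (φ : ℝ → ℝ) (x : ℝ) : ℝ :=
  √(ω ^ 2 * (1 - m ^ 2) + φ x ^ 2 / 2)

/-- The phase of `φ`, normalized to vanish at `a`. For a positive Dirichlet solution it is the
Jacobi amplitude of `ω (x - (a + b) / 2)` of modulus `m`, shifted by `π / 2`. -/
noncomputable def phase (ω m : ℝ) (φ : ℝ → ℝ) (a x : ℝ) : ℝ :=
  ∫ t in a..x, phaseSpeed ω m φ t

lemma exists_frequency_modulus (μ : ℝ) {c : ℝ} (hc : c ≠ 0) :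
    ∃ ω > 0, ∃ m ∈ Ioo (0 : ℝ) 1,
      μ = ω ^ 2 * (2 * m ^ 2 - 1) ∧ c ^ 2 = 2 * ω ^ 4 * m ^ 2 * (1 - m ^ 2) := by
  have hc_sq : 0 < c ^ 2 := by positivity
  obtain ⟨W, hW_pos, hW_sq⟩ : ∃ W > 0, W ^ 2 = μ ^ 2 + 2 * c ^ 2 :=
    ⟨√(μ ^ 2 + 2 * c ^ 2), by positivity, Real.sq_sqrt (by positivity)⟩
  obtain ⟨hW_neg, hμW⟩ : -W < μ ∧ μ < W :=
    abs_lt.1 (abs_lt_of_sq_lt_sq (by linarith) hW_pos.le)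
  have hm_pos : 0 < (W + μ) / (2 * W) := div_pos (by linarith) (by linarith)
  have hm_lt : (W + μ) / (2 * W) < 1 := by rw [div_lt_one (by linarith)]; linarith
  refine ⟨√W, Real.sqrt_pos.2 hW_pos, √((W + μ) / (2 * W)),
    ⟨Real.sqrt_pos.2 hm_pos, by rwa [Real.sqrt_lt' one_pos, one_pow]⟩, ?_, ?_⟩
  · rw [Real.sq_sqrt hW_pos.le, Real.sq_sqrt hm_pos.le]
    field_simp
    ring
  · rw [show √W ^ 4 = (√W ^ 2) ^ 2 by ring, Real.sq_sqrt hW_pos.le, Real.sq_sqrt hm_pos.le]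
    field_simp
    linarith

namespace IsFocusingSolution

variable {μ a b : ℝ} {φ φ' : ℝ → ℝ}

lemma continuousOn (hφ : IsFocusingSolution μ a b φ φ') : ContinuousOn φ (Icc a b) :=
  fun x hx => (hφ.hasDerivWithinAt x hx).continuousWithinAt

lemma energy_eq (hφ : IsFocusingSolution μ a b φ φ') :
    ∀ x ∈ Icc a b, φ' x ^ 2 - μ * φ x ^ 2 + φ x ^ 4 / 2 =
      φ' a ^ 2 - μ * φ a ^ 2 + φ a ^ 4 / 2 := by
  refine eq_left_of_hasDerivWithinAt_zero
    (f := fun x => φ' x ^ 2 - μ * φ x ^ 2 + φ x ^ 4 / 2) fun x hx => ?_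
  have hd := hφ.hasDerivWithinAt x hx
  have hd' := hφ.hasDerivWithinAt_deriv x hx
  exact (((hd'.pow 2).sub ((hd.pow 2).const_mul μ)).add ((hd.pow 4).div_const 2)).congr_deriv
    (by push_cast; ring)

lemma eq_zero_of_left_eq_zero (hφ : IsFocusingSolution μ a b φ φ') (ha : φ a = 0)
    (ha' : φ' a = 0) : ∀ x ∈ Icc a b, φ x = 0 := by
  refine eq_zero_of_abs_deriv_le_mul_abs_self_of_eq_zero_right (f' := φ') (K := √|μ|)
    hφ.continuousOn
    (fun x hx => (hφ.hasDerivWithinAt x (Ico_subset_Icc_self hx)).mono_of_mem_nhdsWithin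
      (Icc_mem_nhdsGE_of_mem hx)) ha fun x hx => ?_
  have henergy := hφ.energy_eq x (Ico_subset_Icc_self hx)
  have hμ : μ * φ x ^ 2 ≤ |μ| * φ x ^ 2 := by gcongr; exact le_abs_self μ
  refine abs_le_of_sq_le_sq ?_ (by positivity)
  rw [mul_pow, Real.sq_sqrt (abs_nonneg μ), Real.norm_eq_abs, sq_abs]
  rw [ha, ha'] at henergy
  linarith [show 0 ≤ φ x ^ 4 by positivity]

end IsFocusingSolution

section Phase

variable {ω m a b : ℝ} {φ φ' : ℝ → ℝ}

lemma phaseSpeed_pos (hω : 0 < ω) (hm : m ^ 2 < 1) (φ : ℝ → ℝ) (x : ℝ) :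
    0 < phaseSpeed ω m φ x :=
  Real.sqrt_pos.2 (by have := sub_pos.2 hm; positivity)

lemma phaseSpeed_sq (hm : m ^ 2 < 1) (φ : ℝ → ℝ) (x : ℝ) :
    phaseSpeed ω m φ x ^ 2 = ω ^ 2 * (1 - m ^ 2) + φ x ^ 2 / 2 :=
  Real.sq_sqrt (by have := sub_pos.2 hm; positivity)

lemma phaseSpeed_eq_of_eq_sin (hω : 0 ≤ ω) {x θ : ℝ}
    (hφ : φ x = √2 * ω * m * Real.sin θ) :
    phaseSpeed ω m φ x = ω * √(1 - m ^ 2 * Real.cos θ ^ 2) := by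
  rw [phaseSpeed, ← Real.sqrt_sq hω, ← Real.sqrt_mul (sq_nonneg _), Real.sqrt_sq hω]
  congr 1
  rw [hφ, mul_pow, mul_pow, mul_pow, Real.sq_sqrt zero_le_two, Real.cos_sq']
  ring

lemma phase_left : phase ω m φ a a = 0 :=
  intervalIntegral.integral_same

lemma hasDerivWithinAt_phase (hφ : ContinuousOn φ (Icc a b)) {x : ℝ} (hx : x ∈ Icc a b) :
    HasDerivWithinAt (phase ω m φ a) (phaseSpeed ω m φ x) (Icc a b) x :=
  hasDerivWithinAt_integral_Icc (by unfold phaseSpeed; fun_prop) hx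

lemma phase_pos (hω : 0 < ω) (hm : m ^ 2 < 1) (hab : a < b) (hφ : ContinuousOn φ (Icc a b)) :
    0 < phase ω m φ a b :=
  intervalIntegral.intervalIntegral_pos_of_pos_on
    (ContinuousOn.intervalIntegrable_of_Icc hab.le (by unfold phaseSpeed; fun_prop))
    (fun x _ => phaseSpeed_pos hω hm φ x) hab

namespace IsFocusingSolution

lemma deriv_sq_eq (hφ : IsFocusingSolution (ω ^ 2 * (2 * m ^ 2 - 1)) a b φ φ')
    (hm : m ^ 2 < 1) (ha : φ a = 0) (ha' : φ' a ^ 2 = 2 * ω ^ 4 * m ^ 2 * (1 - m ^ 2)) {x : ℝ}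
    (hx : x ∈ Icc a b) :
    φ' x ^ 2 = (2 * ω ^ 2 * m ^ 2 - φ x ^ 2) * phaseSpeed ω m φ x ^ 2 := by
  have henergy := hφ.energy_eq x hx
  rw [ha, ha'] at henergy
  rw [phaseSpeed_sq hm]
  linarith

lemma hasDerivWithinAt_deriv_div_phaseSpeed
    (hφ : IsFocusingSolution (ω ^ 2 * (2 * m ^ 2 - 1)) a b φ φ') (hω : 0 < ω) (hm : m ^ 2 < 1)
    (ha : φ a = 0) (ha' : φ' a ^ 2 = 2 * ω ^ 4 * m ^ 2 * (1 - m ^ 2)) {x : ℝ}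
    (hx : x ∈ Icc a b) :
    HasDerivWithinAt (fun x => φ' x / phaseSpeed ω m φ x) (-(φ x * phaseSpeed ω m φ x))
      (Icc a b) x := by
  have hspeed := phaseSpeed_pos hω hm φ x
  have hspeed_sq := phaseSpeed_sq (ω := ω) hm φ x
  have henergy := hφ.deriv_sq_eq hm ha ha' hx
  have hspeed_deriv : HasDerivWithinAt (phaseSpeed ω m φ)
      (φ x * φ' x / (2 * phaseSpeed ω m φ x)) (Icc a b) x :=
    (((((hφ.hasDerivWithinAt x hx).pow 2).div_const 2).const_add (ω ^ 2 * (1 - m ^ 2))).sqrt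
      (Real.sqrt_pos.1 hspeed).ne').congr_deriv
        (by simp only [phaseSpeed, Pi.pow_apply]; push_cast; ring)
  refine ((hφ.hasDerivWithinAt_deriv x hx).div hspeed_deriv hspeed.ne').congr_deriv ?_
  have hquotient : φ' x * (φ x * φ' x / (2 * phaseSpeed ω m φ x)) =
      φ x * (2 * ω ^ 2 * m ^ 2 - φ x ^ 2) / 2 * phaseSpeed ω m φ x := by
    field_simp
    rw [henergy]
    ring
  rw [hquotient, div_eq_iff (by positivity)]
  linear_combination phaseSpeed ω m φ x * φ x * hspeed_sq

lemma eq_mul_sin_phase (hφ : IsFocusingSolution (ω ^ 2 * (2 * m ^ 2 - 1)) a b φ φ')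
    (hω : 0 < ω) (hm₀ : 0 ≤ m) (hm : m ^ 2 < 1) (ha : φ a = 0) (hpos : 0 ≤ φ' a)
    (ha' : φ' a ^ 2 = 2 * ω ^ 4 * m ^ 2 * (1 - m ^ 2)) {x : ℝ} (hx : x ∈ Icc a b) :
    φ x = √2 * ω * m * Real.sin (phase ω m φ a x) := by
  have hspeed (x : ℝ) : 0 < phaseSpeed ω m φ x := phaseSpeed_pos hω hm φ x
  have hamplitude : φ' a / phaseSpeed ω m φ a = √2 * ω * m := by
    rw [← sq_eq_sq₀ (div_nonneg hpos (hspeed a).le) (by positivity), div_pow,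
      hφ.deriv_sq_eq hm ha ha' (left_mem_Icc.2 (hx.1.trans hx.2)),
      mul_div_cancel_right₀ _ (pow_ne_zero 2 (hspeed a).ne'), ha, mul_pow, mul_pow,
      Real.sq_sqrt zero_le_two]
    ring
  have hrotation := eq_rotation_of_hasDerivWithinAt (w := fun x => φ' x / phaseSpeed ω m φ x)
    (fun x hx => by
      simpa only [div_mul_cancel₀ _ (hspeed x).ne'] using hφ.hasDerivWithinAt x hx)
    (fun x hx => hφ.hasDerivWithinAt_deriv_div_phaseSpeed hω hm ha ha' hx)
    (fun x hx => hasDerivWithinAt_phase (ω := ω) (m := m) hφ.continuousOn hx) x hx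
  simpa [ha, phase_left, hamplitude] using hrotation

end IsFocusingSolution

end Phase

namespace IsPositiveDirichletSolution

variable {μ a b : ℝ} {φ φ' : ℝ → ℝ}

lemma deriv_left_nonneg (hφ : IsPositiveDirichletSolution μ a b φ φ') (hab : a < b) :
    0 ≤ φ' a := by
  have hmin : IsMinOn φ (Icc a b) a := by
    intro x hx
    rw [mem_ofPred_eq, hφ.left_eq_zero]
    rcases eq_endpoints_or_mem_Ioo_of_mem_Icc hx with rfl | rfl | hx
    exacts [hφ.left_eq_zero.ge, hφ.right_eq_zero.ge, (hφ.pos x hx).le]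
  have hcone : b - a ∈ posTangentConeAt (Icc a b) a :=
    sub_mem_posTangentConeAt_of_segment_subset (segment_eq_Icc hab.le).subset
  have hderiv := hmin.localize.hasFDerivWithinAt_nonneg
    (hφ.hasDerivWithinAt a (left_mem_Icc.2 hab.le)).hasFDerivWithinAt hcone
  exact nonneg_of_mul_nonneg_right (by simpa using hderiv) (sub_pos.2 hab)

lemma deriv_left_ne_zero (hφ : IsPositiveDirichletSolution μ a b φ φ') (hab : a < b) :
    φ' a ≠ 0 := by
  intro ha'
  obtain ⟨x, hx⟩ := nonempty_Ioo.2 hab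
  exact (hφ.pos x hx).ne'
    (hφ.eq_zero_of_left_eq_zero hφ.left_eq_zero ha' x (Ioo_subset_Icc_self hx))

lemma exists_isPendulumPhase (hφ : IsPositiveDirichletSolution μ a b φ φ') (hab : a < b) :
    ∃ ω > 0, ∃ m ∈ Ioo (0 : ℝ) 1, ∃ T : ℝ → ℝ, μ = ω ^ 2 * (2 * m ^ 2 - 1) ∧
      T a = 0 ∧ T b = Real.pi ∧ IsPendulumPhase ω m a b T ∧
      ∀ x ∈ Icc a b, φ x = √2 * ω * m * Real.sin (T x) := by
  obtain ⟨ω, hω, m, hm, rfl, hc⟩ := exists_frequency_modulus μ (hφ.deriv_left_ne_zero hab)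
  have hm₁ : m ^ 2 < 1 := sq_lt_one_of_mem_Ico (Ioo_subset_Ico_self hm)
  have hamplitude : 0 < √2 * ω * m := by have := hm.1; positivity
  have hderiv (x : ℝ) (hx : x ∈ Icc a b) :
      HasDerivWithinAt (phase ω m φ a) (phaseSpeed ω m φ x) (Icc a b) x :=
    hasDerivWithinAt_phase hφ.continuousOn hx
  have hsin (x : ℝ) (hx : x ∈ Icc a b) : φ x = √2 * ω * m * Real.sin (phase ω m φ a x) :=
    hφ.eq_mul_sin_phase hω hm.1.le hm₁ hφ.left_eq_zero (hφ.deriv_left_nonneg hab) hc hx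
  refine ⟨ω, hω, m, hm, phase ω m φ a, rfl, phase_left, ?_, fun x hx => ?_, hsin⟩
  · refine eq_pi_of_sin_pos_of_sin_eq_zero hab.le (fun x hx => (hderiv x hx).continuousWithinAt)
      phase_left (phase_pos hω hm₁ hab hφ.continuousOn) (fun x hx => ?_) ?_
    · exact pos_of_mul_pos_right
        (hsin x (Ioo_subset_Icc_self hx) ▸ hφ.pos x hx) hamplitude.le
    · have hb := hsin b (right_mem_Icc.2 hab.le)
      rw [hφ.right_eq_zero] at hb
      exact (mul_eq_zero.1 hb.symm).resolve_left hamplitude.ne'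
  · exact (hderiv x hx).congr_deriv (phaseSpeed_eq_of_eq_sin hω.le (hsin x hx))

lemma exists_modulus (hφ : IsPositiveDirichletSolution μ a b φ φ') (hab : a < b) :
    ∃ m ∈ Ico (0 : ℝ) 1, μ * (b - a) ^ 2 = 4 * (2 * m ^ 2 - 1) * ellK m ^ 2 ∧
      ∫ x in a..b, φ x ^ 2 = 8 * ellK m * (ellE m - (1 - m ^ 2) * ellK m) / (b - a) := by
  obtain ⟨ω, -, m, hm, T, rfl, ha, hb, hT, hsin⟩ := hφ.exists_isPendulumPhase hab
  have hm₁ : m ^ 2 < 1 := sq_lt_one_of_mem_Ico (Ioo_subset_Ico_self hm)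
  have hlength : ω * (b - a) = 2 * ellK m :=
    hT.mul_sub_eq_two_mul_ellK hm₁ hab.le ha hb
  have hmass : ∫ x in a..b, φ x ^ 2 = 2 * ω ^ 2 * ∫ x in a..b, m ^ 2 * Real.sin (T x) ^ 2 := by
    rw [← intervalIntegral.integral_const_mul]
    refine intervalIntegral.integral_congr fun x hx => ?_
    simp only [hsin x (uIcc_of_le hab.le ▸ hx), mul_pow, Real.sq_sqrt zero_le_two]
    ring
  refine ⟨m, Ioo_subset_Ico_self hm, ?_, ?_⟩
  · linear_combination (2 * m ^ 2 - 1) * (ω * (b - a) + 2 * ellK m) * hlength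
  · rw [hmass, eq_div_iff (sub_pos.2 hab).ne']
    linear_combination 2 * ω * (b - a) * hT.mul_integral_sq_mul_sin_sq hm₁ hab.le ha hb
      + 4 * (ellE m - (1 - m ^ 2) * ellK m) * hlength

end IsPositiveDirichletSolution

theorem stmt_3_general {μ a b k : ℝ} {φ φ' : ℝ → ℝ} (hab : a < b) (hk : k ∈ Ico (0 : ℝ) 1)
    (hkμ : μ * (b - a) ^ 2 = 4 * (2 * k ^ 2 - 1) * ellK k ^ 2)
    (hφ : IsPositiveDirichletSolution μ a b φ φ') :
    ∫ x in a..b, φ x ^ 2 = 8 * ellK k * (ellE k - (1 - k ^ 2) * ellK k) / (b - a) := by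
  obtain ⟨m, hm, hmμ, hmass⟩ := hφ.exists_modulus hab
  obtain rfl : k = m :=
    strictMonoOn_two_mul_sq_sub_one_mul_ellK_sq.injOn hk hm (by linarith)
  exact hmass

/-- `∫₀¹ φ_μ² = 8 K(k) (E(k) - (1-k²) K(k))` where `k ∈ [0,1)` solves
`μ = 4 (2k² - 1) K(k)²`. -/
theorem stmt_3 (μ k : ℝ) (hμ : -Real.pi ^ 2 < μ) (hk : k ∈ Set.Ico (0:ℝ) 1)
    (hkμ : μ = 4 * (2 * k ^ 2 - 1) * ellK k ^ 2)
    (φ : ℝ → ℝ) (hφ : IsGroundState μ φ) :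
    ∫ x in (0:ℝ)..1, φ x ^ 2 = 8 * ellK k * (ellE k - (1 - k ^ 2) * ellK k) := by
  obtain ⟨φ', hφ'⟩ := hφ.exists_isPositiveDirichletSolution
  simpa using stmt_3_general zero_lt_one hk (by simpa using hkμ) hφ'
end

section
/- Let $T>0$, $N\in\mathbb{N}$, and let $(\omega_k)_{k\geq 1}$ be an increasing sequence of positive reals with $\omega_{k+1}-\omega_k\to+\infty$. Then there exists a continuous linear map $L : \mathbb{R}^N\times\ell^2(\mathbb{N}^*,\mathbb{C}) \to L^2((0,T),\mathbb{R})$ such that for all data $(\tilde d, d)$, the function $v = L(\tilde d,d)$ satisfies the moment equations $\int_0^T v(t)e^{i\omega_k t}dt = d_k$ for all $k\geq 1$ and $\int_0^T t^k v(t)dt = \tilde d_{k+1}$ for $k=0,\dots,N-1$. -/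
open MeasureTheory Set Filter

/-!
The moment problem has a bounded linear solution operator over `ℂ` as soon as the functions
`e^{±iω_k t}` and `tʲ` form a Riesz–Fischer sequence in `L²(0, T)`: the map from finite combinations
to their coefficients is then bounded, and its adjoint solves the moment problem. If the moments
prescribed at `ω_k` and `-ω_k` are conjugate to each other, the real part of a solution is a
solution.

After finitely many frequencies are removed, the others are separated by a gap `γ` with `γT` as
large as we like, and the weight `t (T - t)` makes the Gram matrix of the exponentials diagonally
dominant (Ingham). To put the removed frequencies and the powers back, Haraux uses the operators
`f ↦ f - δ⁻¹ ∫₀^δ e^{-iμs} f(· + s) ds`. Such an operator annihilates `e^{iμt}`, lowers the degree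
of polynomials if `μ = 0`, and multiplies the remaining exponentials by factors bounded away from
zero; it only lengthens the interval by `δ`. Composing finitely many of them carries the lower
estimate from `(0, T/2)` to `(0, T)`, modulo the finite-dimensional span of the functions put back,
on which linear independence suffices.
-/

section RieszFischer

variable {ι κ 𝕜 E : Type*} [RCLike 𝕜] [NormedAddCommGroup E] [NormedSpace 𝕜 E]

/-- A Bessel sequence: synthesis of finitely supported coefficients is bounded in the `ℓ²` norm.
Lower estimates need this upper one to survive the addition of finitely many vectors. -/
def IsBesselSequence (𝕜 : Type*) {ι E : Type*} [RCLike 𝕜] [NormedAddCommGroup E] [NormedSpace 𝕜 E]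
    (e : ι → E) : Prop :=
  ∃ C : ℝ, 0 ≤ C ∧ ∀ (F : Finset ι) (a : ι → 𝕜), ‖∑ i ∈ F, a i • e i‖ ^ 2 ≤ C * ∑ i ∈ F, ‖a i‖ ^ 2

/-- A Riesz–Fischer sequence modulo a subspace `V`: finite combinations of the `e i` control the
`ℓ²` norm of their coefficients, even after adding an element of `V`. For `V = ⊥` this is the usual
notion. -/
def IsRieszFischerModulo (e : ι → E) (V : Submodule 𝕜 E) : Prop :=
  ∃ C : ℝ, 0 ≤ C ∧ ∀ (F : Finset ι) (a : ι → 𝕜), ∀ g ∈ V,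
    ∑ i ∈ F, ‖a i‖ ^ 2 ≤ C * ‖∑ i ∈ F, a i • e i + g‖ ^ 2

lemma norm_add_sq_le_two_mul (x y : E) : ‖x + y‖ ^ 2 ≤ 2 * (‖x‖ ^ 2 + ‖y‖ ^ 2) :=
  (pow_le_pow_left₀ (norm_nonneg _) (norm_add_le x y) 2).trans add_sq_le

namespace IsRieszFischerModulo

variable {e : ι → E} {w : κ → E} {V W : Submodule 𝕜 E}

lemma comp_injective (h : IsRieszFischerModulo e V) {f : κ → ι} (hf : f.Injective) :
    IsRieszFischerModulo (e ∘ f) V := by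
  obtain ⟨C, hC, h⟩ := h
  refine ⟨C, hC, fun F a g hg => ?_⟩
  have := h (F.map ⟨f, hf⟩) (Function.extend f a 0) g hg
  simpa only [Finset.sum_map, Function.Embedding.coeFn_mk, hf.extend_apply, Function.comp_apply]
    using this

lemma of_comp_surjective {f : κ → ι} (hf : f.Surjective) (h : IsRieszFischerModulo (e ∘ f) V) :
    IsRieszFischerModulo e V := by
  have := h.comp_injective (Function.injective_surjInv hf)
  rwa [Function.comp_assoc, Function.comp_surjInv, Function.comp_id] at this

lemma sumElim (he : IsRieszFischerModulo e (V ⊔ Submodule.span 𝕜 (range w)))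
    (he' : IsBesselSequence 𝕜 e) (hw : IsRieszFischerModulo w V) :
    IsRieszFischerModulo (Sum.elim e w) V := by
  obtain ⟨A, hA, hAe⟩ := he
  obtain ⟨B, hB, hBe⟩ := he'
  obtain ⟨C, hC, hCw⟩ := hw
  refine ⟨A + C * (2 * (1 + B * A)), by positivity, fun F a g hg => ?_⟩
  obtain ⟨F₁, F₂, rfl⟩ : ∃ F₁ F₂, F = Finset.disjSum F₁ F₂ :=
    ⟨_, _, Finset.toLeft_disjSum_toRight.symm⟩
  simp only [Finset.sum_disjSum, Sum.elim_inl, Sum.elim_inr]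
  set x := ∑ i ∈ F₁, a (Sum.inl i) • e i
  set y := ∑ j ∈ F₂, a (Sum.inr j) • w j
  have hy : y + g ∈ V ⊔ Submodule.span 𝕜 (range w) :=
    add_mem (Submodule.mem_sup_right <| sum_mem fun j _ =>
      Submodule.smul_mem _ _ (Submodule.subset_span (mem_range_self j))) (Submodule.mem_sup_left hg)
  have h₁ : ∑ i ∈ F₁, ‖a (Sum.inl i)‖ ^ 2 ≤ A * ‖x + y + g‖ ^ 2 := by
    rw [add_assoc]; exact hAe F₁ (a ∘ Sum.inl) _ hy
  have h₂ : ∑ j ∈ F₂, ‖a (Sum.inr j)‖ ^ 2 ≤ C * (2 * (1 + B * A)) * ‖x + y + g‖ ^ 2 := calc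
    _ ≤ C * ‖y + g‖ ^ 2 := hCw F₂ (a ∘ Sum.inr) g hg
    _ = C * ‖(x + y + g) + -x‖ ^ 2 := by congr 3; abel
    _ ≤ C * (2 * (‖x + y + g‖ ^ 2 + B * (A * ‖x + y + g‖ ^ 2))) := by
      gcongr
      refine (norm_add_sq_le_two_mul _ _).trans ?_
      rw [norm_neg]
      gcongr
      exact (hBe F₁ (a ∘ Sum.inl)).trans (mul_le_mul_of_nonneg_left h₁ hB)
    _ = _ := by ring
  linarith

lemma of_linearIndependent [Finite ι] (h : LinearIndependent 𝕜 e) :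
    IsRieszFischerModulo e (⊥ : Submodule 𝕜 E) := by
  have := Fintype.ofFinite ι
  obtain ⟨K, -, hK⟩ := (Fintype.linearCombination 𝕜 e).exists_antilipschitzWith
    (LinearMap.ker_eq_bot.2 <| h.fintypeLinearCombination_injective)
  refine ⟨(Fintype.card ι : ℝ) * K ^ 2, by positivity, fun F a g hg => ?_⟩
  obtain rfl : g = 0 := hg
  classical
  let b : ι → 𝕜 := fun i => if i ∈ F then a i else 0
  have hb : Fintype.linearCombination 𝕜 e b = ∑ i ∈ F, a i • e i := by
    simp [Fintype.linearCombination_apply, b, ite_smul, Finset.sum_ite_mem]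
  have hKb : ‖b‖ ≤ K * ‖∑ i ∈ F, a i • e i‖ := by
    simpa only [dist_zero_right, map_zero, hb] using hK.le_mul_dist b 0
  calc ∑ i ∈ F, ‖a i‖ ^ 2 = ∑ i ∈ F, ‖b i‖ ^ 2 := Finset.sum_congr rfl fun i hi => by simp [b, hi]
    _ ≤ ∑ i, ‖b i‖ ^ 2 := Finset.sum_le_univ_sum_of_nonneg fun i => by positivity
    _ ≤ ∑ _ : ι, (K * ‖∑ i ∈ F, a i • e i‖) ^ 2 := by
      gcongr with i
      exact (norm_le_pi_norm b i).trans hKb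
    _ = _ := by simp [mul_pow, mul_assoc]

lemma of_multiplier {M E' : Type*} [AddCommGroup M] [Module 𝕜 M] [NormedAddCommGroup E']
    [NormedSpace 𝕜 E'] {Φ : M →ₗ[𝕜] E} {Φ' : M →ₗ[𝕜] E'} {B : Module.End 𝕜 M} {K c : ℝ}
    (hK : 0 ≤ K) (hΦ : ∀ x, ‖Φ (B x)‖ ^ 2 ≤ K * ‖Φ' x‖ ^ 2) {e : ι → M} {m : ι → 𝕜}
    (hm : ∀ i, 1 ≤ c * ‖m i‖) (hB : ∀ i, B (e i) = m i • e i) {V : Submodule 𝕜 M}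
    (h : IsRieszFischerModulo (Φ ∘ e) (V.map Φ)) :
    IsRieszFischerModulo (Φ' ∘ e) ((V.comap B).map Φ') := by
  obtain ⟨C, hC, h⟩ := h
  refine ⟨c ^ 2 * (C * K), by positivity, fun F a g hg => ?_⟩
  obtain ⟨x, hx, rfl⟩ := hg
  have hsum : Φ (B (∑ i ∈ F, a i • e i + x)) =
      ∑ i ∈ F, (a i * m i) • (Φ ∘ e) i + Φ (B x) := by
    simp only [map_add, map_sum, map_smul, hB, Function.comp_apply, mul_smul]
  have hcoeff (i : ι) : ‖a i‖ ^ 2 ≤ c ^ 2 * ‖a i * m i‖ ^ 2 := calc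
    ‖a i‖ ^ 2 ≤ (‖a i‖ * (c * ‖m i‖)) ^ 2 := by
      gcongr
      exact le_mul_of_one_le_right (norm_nonneg _) (hm i)
    _ = _ := by rw [norm_mul]; ring
  calc ∑ i ∈ F, ‖a i‖ ^ 2 ≤ c ^ 2 * ∑ i ∈ F, ‖a i * m i‖ ^ 2 := by
        rw [Finset.mul_sum]
        exact Finset.sum_le_sum fun i _ => hcoeff i
    _ ≤ c ^ 2 * (C * ‖Φ (B (∑ i ∈ F, a i • e i + x))‖ ^ 2) := by
        gcongr
        exact hsum ▸ h F (fun i => a i * m i) _ (Submodule.mem_map_of_mem hx)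
    _ ≤ c ^ 2 * (C * (K * ‖Φ' (∑ i ∈ F, a i • e i + x)‖ ^ 2)) := by
        gcongr
        exact hΦ _
    _ = _ := by simp only [map_add, map_sum, map_smul, Function.comp_apply, mul_assoc]

lemma mono (h : IsRieszFischerModulo e V) (hWV : W ≤ V) : IsRieszFischerModulo e W := by
  obtain ⟨C, hC, h⟩ := h
  exact ⟨C, hC, fun F a g hg => h F a g (hWV hg)⟩

end IsRieszFischerModulo

lemma norm_linearCombination_single_sq [DecidableEq ι] (a : ι →₀ 𝕜) :
    ‖Finsupp.linearCombination 𝕜 (fun i => lp.single (E := fun _ : ι => 𝕜) 2 i 1) a‖ ^ 2 =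
      ∑ i ∈ a.support, ‖a i‖ ^ 2 := by
  have := lp.norm_sum_single (E := fun _ : ι => 𝕜) (p := 2) (by simp) a a.support
  simp only [ENNReal.toReal_ofNat, Real.rpow_ofNat] at this
  rw [← this, Finsupp.linearCombination_apply, Finsupp.sum]
  simp only [← lp.single_smul, smul_eq_mul, mul_one]

theorem IsRieszFischerModulo.exists_moment_solution {H : Type*} [NormedAddCommGroup H]
    [InnerProductSpace 𝕜 H] [CompleteSpace H] {e : ι → H}
    (h : IsRieszFischerModulo e (⊥ : Submodule 𝕜 H)) :
    ∃ L : lp (fun _ : ι => 𝕜) 2 →L[𝕜] H, ∀ d i, inner 𝕜 (e i) (L d) = d i := by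
  classical
  obtain ⟨C, hC, h⟩ := h
  let synth : (ι →₀ 𝕜) →ₗ[𝕜] H := Finsupp.linearCombination 𝕜 e
  let coeff : (ι →₀ 𝕜) →ₗ[𝕜] lp (fun _ : ι => 𝕜) 2 :=
    Finsupp.linearCombination 𝕜 fun i => lp.single 2 i 1
  let K := synth.range.topologicalClosure
  have : CompleteSpace K := synth.range.isClosed_topologicalClosure.completeSpace_coe
  let synthK : (ι →₀ 𝕜) →ₗ[𝕜] K :=
    synth.codRestrict K fun a => subset_closure (synth.mem_range_self a)
  have hdense : DenseRange synthK := Topology.IsInducing.subtypeVal.dense_iff.2 fun x => by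
    rw [← range_comp]
    exact x.2
  have hbound : ∃ C', ∀ a, ‖coeff a‖ ≤ C' * ‖synthK a‖ := ⟨√C, fun a => by
    have hle : ‖coeff a‖ ^ 2 ≤ C * ‖synth a‖ ^ 2 := by
      rw [norm_linearCombination_single_sq]
      simpa [synth, Finsupp.linearCombination_apply, Finsupp.sum] using h a.support a 0 rfl
    change _ ≤ √C * ‖synth a‖
    rw [← Real.sqrt_sq (norm_nonneg (synth a)), ← Real.sqrt_mul hC]
    exact Real.le_sqrt_of_sq_le hle⟩
  let f : K →L[𝕜] lp (fun _ : ι => 𝕜) 2 := coeff.extendOfNorm synthK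
  have hf (i : ι) : f (synthK (Finsupp.single i 1)) = lp.single 2 i 1 := by
    rw [LinearMap.extendOfNorm_eq hdense hbound, Finsupp.linearCombination_single, one_smul]
  refine ⟨K.subtypeL ∘L f.adjoint, fun d i => ?_⟩
  have he : e i = synthK (Finsupp.single i 1) := by
    change e i = synth (Finsupp.single i 1)
    simp [synth]
  rw [he, ContinuousLinearMap.comp_apply, Submodule.subtypeL_apply, ← Submodule.coe_inner,
    ContinuousLinearMap.adjoint_inner_right, hf, lp.inner_single_left]
  simp

end RieszFischer

section ContinuousFunctions

open scoped ComplexConjugate Topology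

lemma memLp_two_restrict_Ioo (f : C(ℝ, ℂ)) (T : ℝ) :
    MemLp f 2 (volume.restrict (Ioo 0 T)) :=
  (memLp_two_iff_integrable_sq_norm f.continuous.aestronglyMeasurable).2 <|
    ((f.continuous.norm.pow 2).integrableOn_Icc (a := 0) (b := T)).mono_set Ioo_subset_Icc_self

/-- Restriction of continuous functions on `ℝ` to `L²(0, T)`. -/
noncomputable def toL2 (T : ℝ) : C(ℝ, ℂ) →ₗ[ℂ] Lp ℂ 2 (volume.restrict (Ioo 0 T)) where
  toFun f := (memLp_two_restrict_Ioo f T).toLp f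
  map_add' _ _ := rfl
  map_smul' _ _ := rfl

lemma coeFn_toL2 (T : ℝ) (f : C(ℝ, ℂ)) : toL2 T f =ᵐ[volume.restrict (Ioo 0 T)] f :=
  (memLp_two_restrict_Ioo f T).coeFn_toLp

lemma inner_toL2 (T : ℝ) (f : C(ℝ, ℂ)) (u : Lp ℂ 2 (volume.restrict (Ioo 0 T))) :
    inner ℂ (toL2 T f) u = ∫ t in Ioo 0 T, conj (f t) * u t := by
  rw [L2.inner_def]
  refine integral_congr_ae ?_
  filter_upwards [coeFn_toL2 T f] with t ht
  rw [ht, RCLike.inner_apply, mul_comm]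

lemma inner_toL2_toL2 {T : ℝ} (hT : 0 ≤ T) (f g : C(ℝ, ℂ)) :
    inner ℂ (toL2 T f) (toL2 T g) = ∫ t in (0 : ℝ)..T, conj (f t) * g t := by
  rw [inner_toL2, intervalIntegral.integral_of_le hT, integral_Ioc_eq_integral_Ioo]
  refine integral_congr_ae ?_
  filter_upwards [coeFn_toL2 T g] with t ht
  rw [ht]

lemma norm_toL2_sq {T : ℝ} (hT : 0 ≤ T) (f : C(ℝ, ℂ)) :
    ‖toL2 T f‖ ^ 2 = ∫ t in (0 : ℝ)..T, ‖f t‖ ^ 2 := by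
  have h := inner_self_eq_norm_sq_to_K (𝕜 := ℂ) (toL2 T f)
  simp only [inner_toL2_toL2 hT, Complex.conj_mul', ← Complex.ofReal_pow,
    intervalIntegral.integral_ofReal] at h
  exact Complex.ofReal_injective (by rw [Complex.ofReal_pow]; exact h.symm)

lemma norm_toL2_mono {T T' : ℝ} (hT : 0 ≤ T) (h : T ≤ T') (f : C(ℝ, ℂ)) :
    ‖toL2 T f‖ ≤ ‖toL2 T' f‖ := by
  refine le_of_sq_le_sq ?_ (norm_nonneg _)
  rw [norm_toL2_sq hT, norm_toL2_sq (hT.trans h)]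
  exact intervalIntegral.integral_mono_interval le_rfl hT h
    (Eventually.of_forall fun t => sq_nonneg _) ((f.continuous.norm.pow 2).intervalIntegrable _ _)

lemma eqOn_zero_of_toL2_eq_zero {T : ℝ} {f : C(ℝ, ℂ)} (h : toL2 T f = 0) : EqOn f 0 (Ioo 0 T) := by
  have hf : f =ᵐ[volume.restrict (Ioo 0 T)] 0 :=
    (coeFn_toL2 T f).symm.trans (h ▸ Lp.coeFn_zero ℂ 2 _)
  exact Measure.eqOn_open_of_ae_eq hf isOpen_Ioo f.continuous.continuousOn continuousOn_const

/-- The exponential `t ↦ e^{iμt}` on the real line. -/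
noncomputable def expI (μ : ℝ) : C(ℝ, ℂ) := ⟨fun t => Complex.exp (Complex.I * μ * t), by fun_prop⟩

/-- The power function `t ↦ tʲ` on the real line. -/
noncomputable def powC (j : ℕ) : C(ℝ, ℂ) := ⟨fun t => (t : ℂ) ^ j, by fun_prop⟩

lemma expI_apply (μ t : ℝ) : expI μ t = Complex.exp (Complex.I * μ * t) := rfl

lemma powC_apply (j : ℕ) (t : ℝ) : powC j t = (t : ℂ) ^ j := rfl

lemma norm_expI (μ t : ℝ) : ‖expI μ t‖ = 1 := by
  rw [expI_apply, mul_assoc, mul_comm, ← Complex.ofReal_mul, Complex.norm_exp_ofReal_mul_I]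

lemma expI_mul (μ ν t : ℝ) : expI μ t * expI ν t = expI (μ + ν) t := by
  simp only [expI_apply, ← Complex.exp_add]
  push_cast
  ring_nf

lemma expI_add (μ s t : ℝ) : expI μ (s + t) = expI μ s * expI μ t := by
  simp only [expI_apply, ← Complex.exp_add]
  push_cast
  ring_nf

lemma conj_expI (μ t : ℝ) : conj (expI μ t) = expI (-μ) t := by
  simp [expI_apply, ← Complex.exp_conj]

lemma conj_expI_mul (μ ν t : ℝ) : conj (expI μ t) * expI ν t = expI (ν - μ) t := by
  rw [conj_expI, expI_mul, neg_add_eq_sub]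

lemma expI_zero (t : ℝ) : expI 0 t = 1 := by simp [expI_apply]

lemma integral_expI {μ : ℝ} (hμ : μ ≠ 0) (δ : ℝ) :
    ∫ t in (0 : ℝ)..δ, expI μ t = (expI μ δ - 1) / (Complex.I * μ) := by
  have : Complex.I * (μ : ℂ) ≠ 0 := mul_ne_zero Complex.I_ne_zero (mod_cast hμ)
  simp only [expI_apply, integral_exp_mul_complex this]
  simp

/-- The operator `f ↦ f - δ⁻¹ ∫₀^δ e^{-iμs} f(· + s) ds` on continuous functions. It annihilates
the exponential of frequency `μ` and multiplies every other exponential by a nonzero number. -/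
noncomputable def averageDefect (μ δ : ℝ) : Module.End ℂ C(ℝ, ℂ) where
  toFun f :=
    { toFun := fun t => f t - (δ : ℂ)⁻¹ * ∫ s in (0 : ℝ)..δ, conj (expI μ s) * f (t + s)
      continuous_toFun := by
        have := intervalIntegral.continuous_parametric_intervalIntegral_of_continuous'
          (μ := volume) (f := fun t s : ℝ => conj (expI μ s) * f (t + s))
          (by unfold Function.uncurry; fun_prop) 0 δ
        fun_prop }
  map_add' f g := by
    ext t
    have hint (h : C(ℝ, ℂ)) :
        IntervalIntegrable (fun s => conj (expI μ s) * h (t + s)) volume 0 δ :=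
      Continuous.intervalIntegrable (by fun_prop) _ _
    simp only [ContinuousMap.coe_mk, ContinuousMap.add_apply, mul_add,
      intervalIntegral.integral_add (hint f) (hint g)]
    ring
  map_smul' c f := by
    ext t
    simp only [ContinuousMap.coe_mk, ContinuousMap.smul_apply, smul_eq_mul, mul_left_comm _ c,
      intervalIntegral.integral_const_mul, RingHom.id_apply]
    ring

lemma averageDefect_apply (μ δ : ℝ) (f : C(ℝ, ℂ)) (t : ℝ) : averageDefect μ δ f t =
    f t - (δ : ℂ)⁻¹ * ∫ s in (0 : ℝ)..δ, conj (expI μ s) * f (t + s) := rfl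

lemma norm_integral_conj_expI_mul_sq_le (μ : ℝ) {δ : ℝ} (hδ : 0 ≤ δ) (f : C(ℝ, ℂ)) :
    ‖∫ s in (0 : ℝ)..δ, conj (expI μ s) * f s‖ ^ 2 ≤ δ * ∫ s in (0 : ℝ)..δ, ‖f s‖ ^ 2 := by
  have hexp : ‖toL2 δ (expI μ)‖ ^ 2 = δ := by simp [norm_toL2_sq hδ, norm_expI]
  rw [← inner_toL2_toL2 hδ, ← norm_toL2_sq hδ, ← hexp, ← mul_pow, hexp]
  gcongr
  exact norm_inner_le_norm _ _

lemma norm_averageDefect_apply_sq_le (μ : ℝ) {δ T t : ℝ} (hδ : 0 < δ) (ht : t ∈ Icc 0 T)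
    (f : C(ℝ, ℂ)) :
    ‖averageDefect μ δ f t‖ ^ 2 ≤ 2 * (‖f t‖ ^ 2 + δ⁻¹ * ‖toL2 (T + δ) f‖ ^ 2) := by
  have hT : 0 ≤ T := ht.1.trans ht.2
  have hshift : ∫ s in (0 : ℝ)..δ, ‖f (t + s)‖ ^ 2 ≤ ‖toL2 (T + δ) f‖ ^ 2 := by
    rw [intervalIntegral.integral_comp_add_left (fun s => ‖f s‖ ^ 2), add_zero,
      norm_toL2_sq (by positivity)]
    exact intervalIntegral.integral_mono_interval ht.1 (by linarith) (by linarith [ht.2])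
      (Eventually.of_forall fun t => sq_nonneg _)
      ((f.continuous.norm.pow 2).intervalIntegrable _ _)
  have hcs := norm_integral_conj_expI_mul_sq_le μ hδ.le (f.comp (ContinuousMap.addLeft t))
  simp only [ContinuousMap.comp_apply, ContinuousMap.coe_addLeft] at hcs
  calc ‖averageDefect μ δ f t‖ ^ 2
      ≤ (‖f t‖ + δ⁻¹ * ‖∫ s in (0 : ℝ)..δ, conj (expI μ s) * f (t + s)‖) ^ 2 := by
        gcongr
        refine (norm_sub_le _ _).trans_eq ?_
        rw [norm_mul, norm_inv, Complex.norm_of_nonneg hδ.le]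
    _ ≤ 2 * (‖f t‖ ^ 2 + (δ⁻¹ * ‖∫ s in (0 : ℝ)..δ, conj (expI μ s) * f (t + s)‖) ^ 2) :=
        add_sq_le
    _ ≤ 2 * (‖f t‖ ^ 2 + δ⁻¹ ^ 2 * (δ * ‖toL2 (T + δ) f‖ ^ 2)) := by
        rw [mul_pow]
        gcongr
        exact hcs.trans (by gcongr)
    _ = _ := by field_simp

lemma norm_toL2_averageDefect_sq_le (μ : ℝ) {δ T : ℝ} (hδ : 0 < δ) (hT : 0 ≤ T) (f : C(ℝ, ℂ)) :
    ‖toL2 T (averageDefect μ δ f)‖ ^ 2 ≤ 2 * (1 + T / δ) * ‖toL2 (T + δ) f‖ ^ 2 := by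
  calc ‖toL2 T (averageDefect μ δ f)‖ ^ 2
      ≤ ∫ t in (0 : ℝ)..T, 2 * (‖f t‖ ^ 2 + δ⁻¹ * ‖toL2 (T + δ) f‖ ^ 2) := by
        rw [norm_toL2_sq hT]
        exact intervalIntegral.integral_mono_on hT
          (((averageDefect μ δ f).continuous.norm.pow 2).intervalIntegrable _ _)
          (Continuous.intervalIntegrable (by fun_prop) _ _)
          fun t ht => norm_averageDefect_apply_sq_le μ hδ ht f
    _ = 2 * (‖toL2 T f‖ ^ 2 + T / δ * ‖toL2 (T + δ) f‖ ^ 2) := by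
        rw [intervalIntegral.integral_const_mul, intervalIntegral.integral_add
          (Continuous.intervalIntegrable (by fun_prop) _ _) intervalIntegrable_const,
          ← norm_toL2_sq hT, intervalIntegral.integral_const, smul_eq_mul]
        ring
    _ ≤ 2 * (‖toL2 (T + δ) f‖ ^ 2 + T / δ * ‖toL2 (T + δ) f‖ ^ 2) := by
        gcongr
        exact norm_toL2_mono hT (by linarith) f
    _ = _ := by ring

/-- The symbol of `averageDefect`: the factor by which it multiplies an exponential, as a function
of the difference between the frequency of that exponential and the annihilated one. -/
noncomputable def averageDefectSymbol (δ y : ℝ) : ℂ := 1 - (δ : ℂ)⁻¹ * ∫ s in (0 : ℝ)..δ, expI y s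

lemma averageDefect_expI (μ δ x : ℝ) :
    averageDefect μ δ (expI x) = averageDefectSymbol δ (x - μ) • expI x := by
  ext t
  rw [averageDefect_apply, ContinuousMap.smul_apply, averageDefectSymbol, smul_eq_mul, sub_mul,
    mul_assoc, ← intervalIntegral.integral_mul_const]
  simp only [expI_add, ← conj_expI_mul μ x]
  ring_nf

lemma averageDefectSymbol_zero {δ : ℝ} (hδ : δ ≠ 0) : averageDefectSymbol δ 0 = 0 := by
  simp [averageDefectSymbol, expI_zero, hδ]

lemma averageDefectSymbol_of_ne_zero (δ : ℝ) {y : ℝ} (hy : y ≠ 0) :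
    averageDefectSymbol δ y = 1 - (expI y δ - 1) / (Complex.I * (y * δ : ℝ)) := by
  rw [averageDefectSymbol, integral_expI hy]
  push_cast
  field_simp

lemma averageDefectSymbol_ne_zero {δ y : ℝ} (hδ : δ ≠ 0) (hy : y ≠ 0) :
    averageDefectSymbol δ y ≠ 0 := by
  intro h
  have hne : Complex.I * ((y * δ : ℝ) : ℂ) ≠ 0 :=
    mul_ne_zero Complex.I_ne_zero (mod_cast mul_ne_zero hy hδ)
  rw [averageDefectSymbol_of_ne_zero δ hy, sub_eq_zero, eq_div_iff hne, one_mul] at h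
  have hsq : ‖(1 : ℂ) + (y * δ : ℝ) * Complex.I‖ ^ 2 = 1 := by
    rw [mul_comm, h, add_sub_cancel, norm_expI, one_pow]
  rw [← Complex.ofReal_one, Complex.sq_norm, Complex.normSq_add_mul_I] at hsq
  have := sq_pos_of_ne_zero (mul_ne_zero hy hδ)
  linarith

lemma tendsto_averageDefectSymbol {δ : ℝ} (hδ : δ ≠ 0) :
    Tendsto (averageDefectSymbol δ) (cocompact ℝ) (𝓝 1) := by
  have hbound : ∀ᶠ y in cocompact ℝ, ‖averageDefectSymbol δ y - 1‖ ≤ 2 / |δ| * ‖y‖⁻¹ := by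
    filter_upwards [(Set.finite_singleton (0 : ℝ)).isCompact.compl_mem_cocompact] with y hy
    have hnum : ‖expI y δ - 1‖ ≤ 2 :=
      (norm_sub_le _ _).trans_eq (by rw [norm_expI, norm_one, one_add_one_eq_two])
    rw [averageDefectSymbol_of_ne_zero δ hy, sub_sub_cancel_left, norm_neg, norm_div, norm_mul,
      Complex.norm_I, one_mul, Complex.norm_real, norm_mul, Real.norm_eq_abs δ]
    calc _ ≤ 2 / (‖y‖ * |δ|) := by gcongr
      _ = _ := by ring
  refine tendsto_iff_norm_sub_tendsto_zero.2 (squeeze_zero' (.of_forall fun _ => norm_nonneg _)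
    hbound ?_)
  simpa only [mul_zero, Function.comp_apply] using
    (tendsto_inv_atTop_zero.comp (tendsto_norm_cocompact_atTop (E := ℝ))).const_mul (2 / |δ|)

lemma exists_one_le_mul_norm_averageDefectSymbol {ι : Type*} {lam : ι → ℝ}
    (hlam : Tendsto lam cofinite (cocompact ℝ)) {μ δ : ℝ} (hδ : δ ≠ 0) (hμ : ∀ i, lam i ≠ μ) :
    ∃ c, ∀ i, 1 ≤ c * ‖averageDefectSymbol δ (lam i - μ)‖ := by
  have hshift : Tendsto (fun i => lam i - μ) cofinite (cocompact ℝ) :=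
    (Homeomorph.subRight μ).isClosedEmbedding.tendsto_cocompact.comp hlam
  have hinv : Tendsto (fun i => ‖averageDefectSymbol δ (lam i - μ)‖⁻¹) cofinite (𝓝 ‖(1 : ℂ)‖⁻¹) :=
    (((tendsto_averageDefectSymbol hδ).comp hshift).norm).inv₀ (by simp)
  obtain ⟨c, hc⟩ := hinv.bddAbove_range_of_cofinite
  refine ⟨c, fun i => ?_⟩
  have hpos := norm_pos_iff.2 (averageDefectSymbol_ne_zero hδ (sub_ne_zero.2 (hμ i)))
  exact (inv_le_iff_one_le_mul₀ hpos).1 (hc (mem_range_self i))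

lemma averageDefect_zero_powC {δ : ℝ} (hδ : δ ≠ 0) (n : ℕ) :
    ∃ c : ℕ → ℂ, averageDefect 0 δ (powC n) = ∑ l ∈ Finset.range n, c l • powC l := by
  refine ⟨fun l => -((δ : ℂ)⁻¹ * ∫ s in (0 : ℝ)..δ, (s : ℂ) ^ (n - l) * n.choose l), ?_⟩
  ext t
  have hδ' : (δ : ℂ) ≠ 0 := mod_cast hδ
  have hint : ∫ s in (0 : ℝ)..δ, ((t + s : ℝ) : ℂ) ^ n =
      ∑ l ∈ Finset.range (n + 1), t ^ l * ∫ s in (0 : ℝ)..δ, (s : ℂ) ^ (n - l) * n.choose l := by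
    simp only [Complex.ofReal_add, add_pow, mul_assoc]
    rw [intervalIntegral.integral_finsetSum fun l _ =>
      Continuous.intervalIntegrable (by fun_prop) _ _]
    simp only [intervalIntegral.integral_const_mul]
  simp only [averageDefect_apply, expI_zero, map_one, one_mul, powC_apply, hint,
    Finset.sum_range_succ, ContinuousMap.coe_sum, Finset.sum_apply, ContinuousMap.smul_apply,
    smul_eq_mul, neg_mul, Finset.sum_neg_distrib]
  simp [mul_add, Finset.mul_sum, hδ', mul_left_comm, mul_comm]

lemma averageDefect_zero_pow_powC {δ : ℝ} (hδ : δ ≠ 0) {n i : ℕ} (hi : i < n) :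
    (averageDefect 0 δ ^ n) (powC i) = 0 := by
  induction n generalizing i with
  | zero => exact absurd hi i.not_lt_zero
  | succ n ih =>
    obtain ⟨c, hc⟩ := averageDefect_zero_powC hδ i
    rw [pow_succ, Module.End.mul_apply, hc, map_sum]
    refine Finset.sum_eq_zero fun l hl => ?_
    rw [map_smul, ih ((Finset.mem_range.1 hl).trans_le (Nat.lt_succ_iff.1 hi))]
    exact smul_zero (A := C(ℝ, ℂ)) (c l)

end ContinuousFunctions

section Separated

open scoped ComplexConjugate

variable {ι : Type*}

lemma hasDerivAt_expI (μ t : ℝ) : HasDerivAt (expI μ) (Complex.I * μ * expI μ t) t := by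
  have := (Complex.ofRealCLM.hasDerivAt (x := t)).const_mul (Complex.I * (μ : ℂ))
  convert! this.cexp using 1
  simp [expI_apply, mul_comm]

lemma integral_mul_expI {u u' : ℝ → ℂ} (hu : ∀ t, HasDerivAt u (u' t) t) (hu' : Continuous u')
    {μ : ℝ} (hμ : μ ≠ 0) (a b : ℝ) : ∫ t in a..b, u t * expI μ t =
      (u b * expI μ b - u a * expI μ a - ∫ t in a..b, u' t * expI μ t) / (Complex.I * μ) := by
  have hz : Complex.I * (μ : ℂ) ≠ 0 := mul_ne_zero Complex.I_ne_zero (mod_cast hμ)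
  rw [eq_div_iff hz, ← intervalIntegral.integral_mul_deriv_eq_deriv_mul (fun t _ => hu t)
    (fun t _ => hasDerivAt_expI μ t) (hu'.intervalIntegrable _ _)
    (Continuous.intervalIntegrable (by fun_prop) _ _), ← intervalIntegral.integral_mul_const]
  exact intervalIntegral.integral_congr fun t _ => by ring

/-- The Fourier transform of the weight `(t - a) (b - t)` on `[a, b]`. The weight vanishes at both
endpoints, so its transform decays quadratically, which makes Gram matrices of separated
exponentials diagonally dominant. -/
noncomputable def parabolaTransform (a b μ : ℝ) : ℂ :=
  ∫ t in a..b, ((t - a) * (b - t) : ℂ) * expI μ t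

lemma parabolaTransform_zero (a b : ℝ) : parabolaTransform a b 0 = ((b - a) ^ 3 / 6 : ℝ) := by
  have hderiv (t : ℝ) : HasDerivAt (fun t : ℝ => (b - a) * (t - a) ^ 2 / 2 - (t - a) ^ 3 / 3)
      ((t - a) * (b - t)) t := by
    have h := (hasDerivAt_id t).sub_const a
    convert! (((h.pow 2).const_mul (b - a)).div_const 2).sub ((h.pow 3).div_const 3) using 1
    simp only [id_eq]
    ring
  have hint : ∫ t in a..b, (t - a) * (b - t) = (b - a) ^ 3 / 6 := by
    rw [intervalIntegral.integral_eq_sub_of_hasDerivAt (fun t _ => hderiv t)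
      (Continuous.intervalIntegrable (by fun_prop) _ _)]
    ring
  rw [← hint, ← intervalIntegral.integral_ofReal, parabolaTransform]
  exact intervalIntegral.integral_congr fun t _ => by simp [expI_zero]

lemma norm_parabolaTransform_le {a b μ : ℝ} (hab : a ≤ b) (hμ : μ ≠ 0) :
    ‖parabolaTransform a b μ‖ ≤ 4 * (b - a) * (1 / μ ^ 2) := by
  have hid (t : ℝ) : HasDerivAt (fun t : ℝ => (t : ℂ)) 1 t := Complex.ofRealCLM.hasDerivAt
  have hw (t : ℝ) : HasDerivAt (fun t : ℝ => ((t - a) * (b - t) : ℂ)) (a + b - 2 * t) t := by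
    convert! ((hid t).sub_const (a : ℂ)).mul ((hid t).const_sub (b : ℂ)) using 1
    ring
  have hw' (t : ℝ) : HasDerivAt (fun t : ℝ => (a + b - 2 * t : ℂ)) (-2) t := by
    simpa only [mul_one] using ((hid t).const_mul 2).const_sub (a + b : ℂ)
  have hparts : parabolaTransform a b μ =
      ((b - a : ℝ) * expI μ b + (b - a : ℝ) * expI μ a - 2 * ∫ t in a..b, expI μ t) /
        (Complex.I * μ) ^ 2 := by
    rw [parabolaTransform, integral_mul_expI hw (by fun_prop) hμ,
      integral_mul_expI hw' (by fun_prop) hμ, intervalIntegral.integral_const_mul]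
    push_cast
    field_simp
    ring
  have hint : ‖∫ t in a..b, expI μ t‖ ≤ b - a := by
    simpa only [one_mul, abs_of_nonneg (sub_nonneg.2 hab)] using
      intervalIntegral.norm_integral_le_of_norm_le_const fun t (_ : t ∈ uIoc a b) =>
        (norm_expI μ t).le
  rw [hparts, norm_div, norm_pow, norm_mul, Complex.norm_I, one_mul, Complex.norm_real,
    Real.norm_eq_abs, sq_abs, mul_one_div]
  gcongr
  calc _ ≤ (b - a) + (b - a) + 2 * ‖∫ t in a..b, expI μ t‖ := by
        refine (norm_sub_le _ _).trans (add_le_add ((norm_add_le _ _).trans_eq ?_) ?_)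
        · simp only [norm_mul, norm_expI, Complex.norm_of_nonneg (sub_nonneg.2 hab), mul_one]
        · simp
    _ ≤ 4 * (b - a) := by linarith

lemma integral_parabola_mul_norm_sum_sq (lam : ι → ℝ) (F : Finset ι) (c : ι → ℂ) (a b : ℝ) :
    ((∫ t in a..b, (t - a) * (b - t) * ‖∑ k ∈ F, c k * expI (lam k) t‖ ^ 2 : ℝ) : ℂ) =
      ∑ j ∈ F, ∑ k ∈ F, conj (c j) * c k * parabolaTransform a b (lam k - lam j) := by
  have hpt (t : ℝ) :
      (((t - a) * (b - t) * ‖∑ k ∈ F, c k * expI (lam k) t‖ ^ 2 : ℝ) : ℂ) =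
        ∑ j ∈ F, ∑ k ∈ F,
          conj (c j) * c k * (((t - a) * (b - t) : ℂ) * expI (lam k - lam j) t) := by
    push_cast
    rw [← Complex.conj_mul', map_sum, Finset.sum_mul_sum, Finset.mul_sum]
    simp only [Finset.mul_sum, ← conj_expI_mul, map_mul]
    refine Finset.sum_congr rfl fun j _ => Finset.sum_congr rfl fun k _ => by ring
  simp only [← intervalIntegral.integral_ofReal, hpt, parabolaTransform,
    ← intervalIntegral.integral_const_mul]
  rw [intervalIntegral.integral_finsetSum fun j _ =>
    Continuous.intervalIntegrable (by fun_prop) _ _]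
  refine Finset.sum_congr rfl fun j _ => ?_
  rw [intervalIntegral.integral_finsetSum fun k _ =>
    Continuous.intervalIntegrable (by fun_prop) _ _]

lemma norm_sum_sum_conj_mul_sub_le {F : Finset ι} {G : ι → ι → ℂ} {K : ι → ι → ℝ} {D M : ℝ}
    (hdiag : ∀ j, G j j = D) (hoff : ∀ j k, j ≠ k → ‖G j k‖ ≤ K j k) (hK : ∀ j k, 0 ≤ K j k)
    (hsymm : ∀ j k, K j k = K k j) (hrow : ∀ j, ∑ k ∈ F, K j k ≤ M) (c : ι → ℂ) :
    ‖∑ j ∈ F, ∑ k ∈ F, conj (c j) * c k * G j k - D * ∑ k ∈ F, ‖c k‖ ^ 2‖ ≤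
      M * ∑ k ∈ F, ‖c k‖ ^ 2 := by
  classical
  have hterm (j k : ι) : ‖conj (c j) * c k * G j k - if k = j then (D * ‖c j‖ ^ 2 : ℂ) else 0‖ ≤
      2⁻¹ * (‖c j‖ ^ 2 * K j k) + 2⁻¹ * (‖c k‖ ^ 2 * K k j) := by
    rcases eq_or_ne k j with rfl | hkj
    · rw [if_pos rfl, hdiag, Complex.conj_mul', mul_comm, sub_self, norm_zero]
      have := hK k k
      positivity
    · rw [if_neg hkj, sub_zero, norm_mul, norm_mul, RCLike.norm_conj, hsymm k j]
      calc ‖c j‖ * ‖c k‖ * ‖G j k‖ ≤ 2⁻¹ * (‖c j‖ ^ 2 + ‖c k‖ ^ 2) * K j k := by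
            refine mul_le_mul ?_ (hoff j k hkj.symm) (norm_nonneg _) (by positivity)
            linarith [two_mul_le_add_sq ‖c j‖ ‖c k‖]
        _ = _ := by ring
  have hdiff : ∑ j ∈ F, ∑ k ∈ F, conj (c j) * c k * G j k - D * ∑ k ∈ F, (‖c k‖ : ℂ) ^ 2 =
      ∑ j ∈ F, ∑ k ∈ F,
        (conj (c j) * c k * G j k - if k = j then (D * ‖c j‖ ^ 2 : ℂ) else 0) := by
    simp only [Finset.sum_sub_distrib, Finset.sum_ite_eq', Finset.mul_sum]
    congr 1
    exact Finset.sum_congr rfl fun j hj => (if_pos hj).symm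
  push_cast
  rw [hdiff]
  calc _ ≤ ∑ j ∈ F, ∑ k ∈ F, (2⁻¹ * (‖c j‖ ^ 2 * K j k) + 2⁻¹ * (‖c k‖ ^ 2 * K k j)) :=
        norm_sum_le_of_le _ fun j _ => norm_sum_le_of_le _ fun k _ => hterm j k
    _ = ∑ j ∈ F, ‖c j‖ ^ 2 * ∑ k ∈ F, K j k := by
        simp only [Finset.sum_add_distrib, ← Finset.mul_sum]
        rw [Finset.sum_comm (f := fun j k => ‖c k‖ ^ 2 * K k j)]
        simp only [← Finset.mul_sum]
        ring
    _ ≤ ∑ j ∈ F, ‖c j‖ ^ 2 * M := by gcongr with j; exact hrow j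
    _ = _ := by rw [← Finset.sum_mul, mul_comm]

lemma one_div_sq_le_one_div_floor_sq {γ x : ℝ} (hγ : 0 < γ) (hx : γ ≤ |x|) :
    1 / x ^ 2 ≤ 4 / γ ^ 2 * (1 / (⌊x / γ⌋ : ℝ) ^ 2) := by
  have hone : 1 ≤ |x / γ| := by rwa [abs_div, abs_of_pos hγ, one_le_div hγ]
  have hfloor : |x / γ - ⌊x / γ⌋| < 1 := by
    rw [Int.self_sub_floor, Int.abs_fract]
    exact Int.fract_lt_one _
  have hne : (⌊x / γ⌋ : ℝ) ≠ 0 := fun h => hfloor.not_ge (by rwa [h, sub_zero])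
  have hle : |γ * ⌊x / γ⌋ / 2| ≤ |x| := calc
    |γ * ⌊x / γ⌋ / 2| = γ / 2 * |(⌊x / γ⌋ : ℝ)| := by
        rw [mul_div_right_comm, abs_mul, abs_of_pos (half_pos hγ)]
    _ ≤ γ / 2 * (2 * |x / γ|) := by
        gcongr
        have := abs_sub_abs_le_abs_sub (⌊x / γ⌋ : ℝ) (x / γ)
        rw [abs_sub_comm] at this
        linarith
    _ = |x| := by rw [abs_div, abs_of_pos hγ]; field_simp
  calc 1 / x ^ 2 ≤ 1 / (γ * ⌊x / γ⌋ / 2) ^ 2 :=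
        one_div_le_one_div_of_le (by positivity) (sq_le_sq.2 hle)
    _ = _ := by field_simp; norm_num

lemma sum_one_div_sub_sq_le {lam : ι → ℝ} {γ : ℝ} (hγ : 0 < γ)
    (hsep : Pairwise fun j k => γ ≤ |lam j - lam k|) (F : Finset ι) (j : ι) :
    ∑ k ∈ F, 1 / (lam k - lam j) ^ 2 ≤ 4 / γ ^ 2 * ∑' n : ℤ, 1 / (n : ℝ) ^ 2 := by
  let n (k : ι) : ℤ := ⌊(lam k - lam j) / γ⌋
  have hinj : Function.Injective n := by
    intro k l hkl
    by_contra hne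
    have h := Int.abs_sub_lt_one_of_floor_eq_floor hkl
    rw [← sub_div, sub_sub_sub_cancel_right, abs_div, abs_of_pos hγ, div_lt_one hγ] at h
    exact h.not_ge (hsep hne)
  have hle (k : ι) : 1 / (lam k - lam j) ^ 2 ≤ 4 / γ ^ 2 * (1 / (n k : ℝ) ^ 2) := by
    rcases eq_or_ne k j with rfl | hkj
    · rw [sub_self, zero_pow two_ne_zero, div_zero]
      positivity
    · exact one_div_sq_le_one_div_floor_sq hγ (hsep hkj)
  calc ∑ k ∈ F, 1 / (lam k - lam j) ^ 2 ≤ 4 / γ ^ 2 * ∑ k ∈ F, 1 / (n k : ℝ) ^ 2 := by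
        rw [Finset.mul_sum]
        exact Finset.sum_le_sum fun k _ => hle k
    _ = 4 / γ ^ 2 * ∑ m ∈ F.map ⟨n, hinj⟩, 1 / (m : ℝ) ^ 2 := by rw [Finset.sum_map]; rfl
    _ ≤ _ := by
        gcongr
        exact (Real.summable_one_div_int_pow.2 one_lt_two).sum_le_tsum _ fun m _ => by positivity

lemma abs_integral_parabola_mul_norm_sum_sq_sub_le {lam : ι → ℝ} {γ a b : ℝ} (hγ : 0 < γ)
    (hsep : Pairwise fun j k => γ ≤ |lam j - lam k|) (hab : a ≤ b) (F : Finset ι) (c : ι → ℂ) :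
    |(∫ t in a..b, (t - a) * (b - t) * ‖∑ k ∈ F, c k * expI (lam k) t‖ ^ 2) -
        (b - a) ^ 3 / 6 * ∑ k ∈ F, ‖c k‖ ^ 2| ≤
      4 * (b - a) * (4 / γ ^ 2 * ∑' n : ℤ, 1 / (n : ℝ) ^ 2) * ∑ k ∈ F, ‖c k‖ ^ 2 := by
  have : 0 ≤ b - a := sub_nonneg.2 hab
  rw [← Real.norm_eq_abs, ← Complex.norm_real, Complex.ofReal_sub,
    integral_parabola_mul_norm_sum_sq]
  refine (congrArg _ (by push_cast; rfl)).trans_le <| norm_sum_sum_conj_mul_sub_le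
    (G := fun j k => parabolaTransform a b (lam k - lam j))
    (K := fun j k => 4 * (b - a) * (1 / (lam k - lam j) ^ 2)) (D := (b - a) ^ 3 / 6)
    (fun j => ?_) (fun j k hjk => norm_parabolaTransform_le hab ?_) (fun j k => by positivity)
    (fun j k => by rw [← neg_sq, neg_sub]) (fun j => ?_) c
  · rw [sub_self, parabolaTransform_zero]
  · exact abs_pos.1 (hγ.trans_le (hsep hjk.symm))
  · rw [← Finset.mul_sum]
    gcongr
    exact sum_one_div_sub_sq_le hγ hsep F j

lemma norm_sum_smul_toL2_expI_sq {T : ℝ} (hT : 0 ≤ T) (lam : ι → ℝ) (F : Finset ι) (c : ι → ℂ) :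
    ‖∑ k ∈ F, c k • (toL2 T ∘ expI ∘ lam) k‖ ^ 2 =
      ∫ t in (0 : ℝ)..T, ‖∑ k ∈ F, c k * expI (lam k) t‖ ^ 2 := by
  simp only [Function.comp_apply, ← map_smul, ← map_sum, norm_toL2_sq hT, ContinuousMap.coe_sum,
    Finset.sum_apply, ContinuousMap.smul_apply, smul_eq_mul]

lemma isBesselSequence_toL2_expI {lam : ι → ℝ} {γ T : ℝ} (hγ : 0 < γ) (hT : 0 < T)
    (hsep : Pairwise fun j k => γ ≤ |lam j - lam k|) :
    IsBesselSequence ℂ (toL2 T ∘ expI ∘ lam) := by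
  let Z := ∑' n : ℤ, 1 / (n : ℝ) ^ 2
  have : 0 ≤ Z := tsum_nonneg fun n => by positivity
  refine ⟨(2 * T ^ 2)⁻¹ * ((3 * T) ^ 3 / 6 + 4 * (3 * T) * (4 / γ ^ 2 * Z)), by positivity,
    fun F c => ?_⟩
  let f (t : ℝ) : ℝ := ‖∑ k ∈ F, c k * expI (lam k) t‖ ^ 2
  have hf : Continuous f := by fun_prop
  have hgram := (abs_le.1 (abs_integral_parabola_mul_norm_sum_sq_sub_le hγ hsep
    (a := -T) (b := 2 * T) (by linarith) F c)).2
  have hweight : 2 * T ^ 2 * ∫ t in (0 : ℝ)..T, f t ≤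
      ∫ t in (-T)..(2 * T), (t - -T) * (2 * T - t) * f t := by
    rw [← intervalIntegral.integral_const_mul]
    calc _ ≤ ∫ t in (0 : ℝ)..T, (t - -T) * (2 * T - t) * f t := by
          refine intervalIntegral.integral_mono_on hT.le
            (Continuous.intervalIntegrable (by fun_prop) _ _)
            (Continuous.intervalIntegrable (by fun_prop) _ _) fun t ht => ?_
          exact mul_le_mul_of_nonneg_right
            (by nlinarith [mul_nonneg ht.1 (sub_nonneg.2 ht.2)]) (sq_nonneg _)
      _ ≤ _ := by
          refine intervalIntegral.integral_mono_interval (by linarith) hT.le (by linarith) ?_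
            (Continuous.intervalIntegrable (by fun_prop) _ _)
          refine ae_restrict_of_forall_mem measurableSet_Ioc fun t ht => ?_
          exact mul_nonneg (mul_nonneg (by linarith [ht.1]) (by linarith [ht.2])) (sq_nonneg _)
  rw [norm_sum_smul_toL2_expI_sq hT.le, mul_assoc, le_inv_mul_iff₀ (by positivity)]
  rw [show 2 * T - -T = 3 * T by ring] at hgram
  linarith

lemma isRieszFischerModulo_toL2_expI {lam : ι → ℝ} {γ T : ℝ} (hγ : 0 < γ) (hT : 0 < T)
    (hsep : Pairwise fun j k => γ ≤ |lam j - lam k|)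
    (hlarge : 192 * ∑' n : ℤ, 1 / (n : ℝ) ^ 2 ≤ (γ * T) ^ 2) :
    IsRieszFischerModulo (𝕜 := ℂ) (toL2 T ∘ expI ∘ lam) ⊥ := by
  refine ⟨12 / T, by positivity, fun F c g hg => ?_⟩
  obtain rfl : g = 0 := hg
  let f (t : ℝ) : ℝ := ‖∑ k ∈ F, c k * expI (lam k) t‖ ^ 2
  have hf : Continuous f := by fun_prop
  have hgram := (abs_le.1 (abs_integral_parabola_mul_norm_sum_sq_sub_le hγ hsep hT.le F c)).1
  have hweight : ∫ t in (0 : ℝ)..T, (t - 0) * (T - t) * f t ≤ T ^ 2 * ∫ t in (0 : ℝ)..T, f t := by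
    rw [← intervalIntegral.integral_const_mul]
    refine intervalIntegral.integral_mono_on hT.le
      (Continuous.intervalIntegrable (by fun_prop) _ _)
      (Continuous.intervalIntegrable (by fun_prop) _ _) fun t ht => ?_
    exact mul_le_mul_of_nonneg_right (by nlinarith [ht.1, ht.2]) (sq_nonneg _)
  have hoff : 4 * T * (4 / γ ^ 2 * ∑' n : ℤ, 1 / (n : ℝ) ^ 2) ≤ T ^ 3 / 12 := calc
    _ = T / (12 * γ ^ 2) * (192 * ∑' n : ℤ, 1 / (n : ℝ) ^ 2) := by ring_nf
    _ ≤ T / (12 * γ ^ 2) * (γ * T) ^ 2 := by gcongr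
    _ = _ := by field_simp
  have hsum : T ^ 3 / 12 * ∑ k ∈ F, ‖c k‖ ^ 2 ≤ T ^ 2 * ∫ t in (0 : ℝ)..T, f t := by
    have := mul_le_mul_of_nonneg_right hoff (Finset.sum_nonneg fun k (_ : k ∈ F) => sq_nonneg ‖c k‖)
    simp only [sub_zero] at hgram hweight
    linarith
  rw [add_zero, norm_sum_smul_toL2_expI_sq hT.le]
  calc ∑ k ∈ F, ‖c k‖ ^ 2 = 12 / T ^ 3 * (T ^ 3 / 12 * ∑ k ∈ F, ‖c k‖ ^ 2) := by field_simp
    _ ≤ 12 / T ^ 3 * (T ^ 2 * ∫ t in (0 : ℝ)..T, f t) := by gcongr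
    _ = _ := by field_simp; rfl

end Separated

section Averaging

variable {ι : Type*} {lam : ι → ℝ}

lemma isRieszFischerModulo_comap_averageDefect (hlam : Tendsto lam cofinite (cocompact ℝ))
    {μ δ T : ℝ} (hμ : ∀ i, lam i ≠ μ) (hδ : 0 < δ) (hT : 0 ≤ T) {V : Submodule ℂ C(ℝ, ℂ)}
    (h : IsRieszFischerModulo (toL2 T ∘ expI ∘ lam) (V.map (toL2 T))) :
    IsRieszFischerModulo (toL2 (T + δ) ∘ expI ∘ lam)
      ((V.comap (averageDefect μ δ)).map (toL2 (T + δ))) := by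
  obtain ⟨c, hc⟩ := exists_one_le_mul_norm_averageDefectSymbol hlam hδ.ne' hμ
  exact .of_multiplier (by positivity) (norm_toL2_averageDefect_sq_le μ hδ hT) hc
    (fun i => averageDefect_expI μ δ (lam i)) h

lemma isRieszFischerModulo_comap_prod_averageDefect (hlam : Tendsto lam cofinite (cocompact ℝ))
    {δ : ℝ} (hδ : 0 < δ) {l : List ℝ} (hl : ∀ μ ∈ l, ∀ i, lam i ≠ μ) {T : ℝ} (hT : 0 ≤ T)
    {V : Submodule ℂ C(ℝ, ℂ)}
    (h : IsRieszFischerModulo (toL2 T ∘ expI ∘ lam) (V.map (toL2 T))) :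
    IsRieszFischerModulo (toL2 (T + l.length * δ) ∘ expI ∘ lam)
      ((V.comap (l.map (averageDefect · δ)).prod).map (toL2 (T + l.length * δ))) := by
  induction l generalizing T V with
  | nil =>
    rwa [List.length_nil, Nat.cast_zero, zero_mul, add_zero, List.map_nil, List.prod_nil,
      Module.End.one_eq_id, Submodule.comap_id]
  | cons μ l ih =>
    have hstep := ih (fun ν hν => hl ν (List.mem_cons_of_mem _ hν)) (by positivity)
      (isRieszFischerModulo_comap_averageDefect hlam (hl μ List.mem_cons_self) hδ hT h)
    rwa [add_assoc, ← one_add_mul, ← Nat.cast_one_add, Nat.add_comm, ← List.length_cons (a := μ),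
      ← Submodule.comap_comp, ← Module.End.mul_eq_comp, ← List.prod_cons,
      ← List.map_cons (f := (averageDefect · δ))] at hstep

lemma prod_averageDefect_expI (l : List ℝ) (δ x : ℝ) :
    (l.map (averageDefect · δ)).prod (expI x) =
      (l.map fun μ => averageDefectSymbol δ (x - μ)).prod • expI x := by
  induction l with
  | nil => simp
  | cons μ l ih =>
    simp only [List.map_cons, List.prod_cons, Module.End.mul_apply, ih, map_smul,
      averageDefect_expI, smul_smul, mul_comm]

lemma prod_averageDefect_expI_eq_zero {l : List ℝ} {δ : ℝ} (hδ : δ ≠ 0) {μ : ℝ} (hμ : μ ∈ l) :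
    (l.map (averageDefect · δ)).prod (expI μ) = 0 := by
  have hzero : (0 : ℂ) ∈ l.map fun ν => averageDefectSymbol δ (μ - ν) :=
    List.mem_map.2 ⟨μ, hμ, by rw [sub_self, averageDefectSymbol_zero hδ]⟩
  rw [prod_averageDefect_expI, List.prod_eq_zero hzero]
  exact zero_smul ℂ (expI μ)

/-- The span of the exponentials with frequencies in `M` and the powers of degree less than `N`. -/
noncomputable def expPowSpan (M : Set ℝ) (N : ℕ) : Submodule ℂ C(ℝ, ℂ) :=
  Submodule.span ℂ (expI '' M ∪ powC '' Iio N)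

lemma IsRieszFischerModulo.toL2_expI_expPowSpan (hlam : Tendsto lam cofinite (cocompact ℝ))
    {T T' : ℝ} (hT : 0 ≤ T) (hTT' : T < T')
    (h : IsRieszFischerModulo (𝕜 := ℂ) (toL2 T ∘ expI ∘ lam) ⊥) (M : Finset ℝ) (N : ℕ)
    (hM : ∀ i, lam i ∉ M) (h0 : ∀ i, lam i ≠ 0) :
    IsRieszFischerModulo (toL2 T' ∘ expI ∘ lam) ((expPowSpan M N).map (toL2 T')) := by
  let l := M.toList ++ List.replicate (N + 1) 0
  have hl : ∀ μ ∈ l, ∀ i, lam i ≠ μ := by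
    intro μ hμ i
    rcases List.mem_append.1 hμ with hμ | hμ
    · exact fun h => hM i (h ▸ Finset.mem_toList.1 hμ)
    · exact List.eq_of_mem_replicate hμ ▸ h0 i
  have hlen : (0 : ℝ) < l.length := Nat.cast_pos.2 (by simp [l])
  let δ := (T' - T) / l.length
  have hδ : 0 < δ := div_pos (sub_pos.2 hTT') hlen
  have hTδ : T + l.length * δ = T' := by simp only [δ]; field_simp; ring
  have hprod := isRieszFischerModulo_comap_prod_averageDefect hlam hδ hl hT (V := ⊥)
    (by rwa [Submodule.map_bot])
  rw [hTδ] at hprod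
  refine hprod.mono (Submodule.map_mono (Submodule.span_le.2 ?_))
  rintro _ (⟨μ, hμ, rfl⟩ | ⟨j, hj, rfl⟩)
  · exact prod_averageDefect_expI_eq_zero hδ.ne'
      (List.mem_append_left _ (Finset.mem_toList.2 hμ))
  · change (l.map (averageDefect · δ)).prod (powC j) = 0
    rw [List.map_append, List.prod_append, List.map_replicate, List.prod_replicate,
      Module.End.mul_apply, averageDefect_zero_pow_powC hδ.ne' (Nat.lt_succ_of_lt hj), map_zero]

end Averaging

section LinearIndependence

lemma expI_ne_zero (μ : ℝ) : expI μ ≠ 0 := fun h => by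
  simpa [h] using norm_expI μ 0

lemma expI_injective : Function.Injective expI := by
  intro μ ν h
  by_contra hne
  have hμ : averageDefect μ 1 (expI μ) = 0 := by
    rw [averageDefect_expI, sub_self, averageDefectSymbol_zero one_ne_zero]
    exact zero_smul ℂ (expI μ)
  rw [h, averageDefect_expI] at hμ
  have hsymbol := averageDefectSymbol_ne_zero one_ne_zero (sub_ne_zero.2 (Ne.symm hne))
  exact smul_ne_zero hsymbol (expI_ne_zero ν) hμ

lemma linearIndependent_expI : LinearIndependent ℂ expI := by
  let character (μ : ℝ) : Multiplicative ℝ →* ℂ :=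
    { toFun t := expI μ t.toAdd
      map_one' := by simp [expI_apply]
      map_mul' s t := expI_add μ s.toAdd t.toAdd }
  have hinj : Function.Injective character := fun μ ν h =>
    expI_injective (ContinuousMap.ext fun t => DFunLike.congr_fun h (Multiplicative.ofAdd t))
  exact .of_comp (ContinuousMap.coeFnLinearMap ℂ)
    ((linearIndependent_monoidHom (Multiplicative ℝ) ℂ).comp character hinj)

lemma linearIndependent_powC : LinearIndependent ℂ powC := by
  let restrictReal : Polynomial ℂ →ₗ[ℂ] C(ℝ, ℂ) :=
    (ContinuousMap.compRightAlgHom ℂ ℂ ⟨_, Complex.continuous_ofReal⟩).toLinearMap ∘ₗ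
      Polynomial.toContinuousMapAlgHom.toLinearMap
  have hker : LinearMap.ker restrictReal = ⊥ := by
    refine LinearMap.ker_eq_bot'.2 fun p hp => p.eq_zero_of_infinite_isRoot ?_
    refine (infinite_range_of_injective Complex.ofReal_injective).mono ?_
    rintro _ ⟨t, rfl⟩
    exact DFunLike.congr_fun hp t
  convert! (Polynomial.basisMonomials ℂ).linearIndependent.map' restrictReal hker
  ext t
  simp [restrictReal, powC_apply]

lemma linearIndependent_sumElim_expI_powC {κ : Type*} {μ : κ → ℝ} (hμ : μ.Injective)
    (h0 : ∀ k, μ k ≠ 0) (N : ℕ) :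
    LinearIndependent ℂ (Sum.elim (expI ∘ μ) fun j : Fin N => powC j) := by
  let D := averageDefect 0 1 ^ N
  have hexp := linearIndependent_expI.comp μ hμ
  have hDexp (k : κ) : D (expI (μ k)) = averageDefectSymbol 1 (μ k) ^ N • expI (μ k) := by
    simpa [D] using prod_averageDefect_expI (List.replicate N 0) 1 (μ k)
  have hD : LinearIndependent ℂ (D ∘ expI ∘ μ) := by
    let m (k : κ) : ℂˣ := .mk0 _ (pow_ne_zero N (averageDefectSymbol_ne_zero one_ne_zero (h0 k)))
    rw [show D ∘ expI ∘ μ = m • (expI ∘ μ) from funext hDexp]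
    exact hexp.units_smul m
  refine hexp.sum_type (linearIndependent_powC.comp _ Fin.val_injective) ?_
  refine (Submodule.range_ker_disjoint hD).mono_right (Submodule.span_le.2 ?_)
  rintro _ ⟨j, rfl⟩
  exact averageDefect_zero_pow_powC one_ne_zero j.2

lemma disjoint_analytic_ker_toL2 {T : ℝ} (hT : 0 < T) {V : Submodule ℂ C(ℝ, ℂ)}
    (hV : ∀ f ∈ V, AnalyticOnNhd ℝ f univ) : Disjoint V (LinearMap.ker (toL2 T)) := by
  refine Submodule.disjoint_def.2 fun f hfV hf => ?_
  have hev : f =ᶠ[nhds (T / 2)] 0 :=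
    (eqOn_zero_of_toL2_eq_zero hf).eventuallyEq_of_mem (Ioo_mem_nhds (by linarith) (by linarith))
  exact ContinuousMap.ext fun t => (hV f hfV).eqOn_zero_of_preconnected_of_eventuallyEq_zero
    isPreconnected_univ (mem_univ _) hev (mem_univ t)

lemma analyticOnNhd_of_mem_span {s : Set C(ℝ, ℂ)} (hs : ∀ f ∈ s, AnalyticOnNhd ℝ f univ)
    {f : C(ℝ, ℂ)} (hf : f ∈ Submodule.span ℂ s) : AnalyticOnNhd ℝ f univ := by
  induction hf using Submodule.span_induction with
  | mem f hf => exact hs f hf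
  | zero => exact analyticOnNhd_const
  | add f g _ _ hf hg => exact hf.add hg
  | smul c f _ hf => exact analyticOnNhd_const.mul hf

lemma analyticOnNhd_expI (μ : ℝ) : AnalyticOnNhd ℝ (expI μ) univ :=
  fun t _ =>
  analyticAt_cexp.restrictScalars.comp (analyticAt_const.mul (Complex.ofRealCLM.analyticAt t))

lemma analyticOnNhd_powC (j : ℕ) : AnalyticOnNhd ℝ (powC j) univ :=
  fun t _ => (Complex.ofRealCLM.analyticAt t).pow j

lemma linearIndependent_toL2_sumElim_expI_powC {κ : Type*} {μ : κ → ℝ} (hμ : μ.Injective)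
    (h0 : ∀ k, μ k ≠ 0) (N : ℕ) {T : ℝ} (hT : 0 < T) :
    LinearIndependent ℂ (toL2 T ∘ Sum.elim (expI ∘ μ) fun j : Fin N => powC j) := by
  refine (linearIndependent_sumElim_expI_powC hμ h0 N).map <|
    disjoint_analytic_ker_toL2 hT fun f hf => analyticOnNhd_of_mem_span ?_ hf
  rintro _ ⟨k | j, rfl⟩
  · exact analyticOnNhd_expI (μ k)
  · exact analyticOnNhd_powC j

end LinearIndependence

section AsymptoticSeparation

variable {ι : Type*} {lam : ι → ℝ}

/-- A family of reals is asymptotically separated if every prescribed lower bound on the distances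
between its members holds after removing finitely many indices. For an increasing sequence this
says that the gaps tend to infinity; the definition makes no reference to an ordering of the
index type, so it also applies to two-sided families of frequencies. -/
def AsymptoticallySeparated (lam : ι → ℝ) : Prop :=
  ∀ γ : ℝ, ∃ P : Finset ι, ((P : Set ι)ᶜ).Pairwise fun j k => γ ≤ |lam j - lam k|

lemma AsymptoticallySeparated.tendsto_cocompact (h : AsymptoticallySeparated lam) :
    Tendsto lam cofinite (cocompact ℝ) := by
  rw [← Metric.cobounded_eq_cocompact, ← tendsto_norm_atTop_iff_cobounded, tendsto_atTop]
  intro R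
  obtain ⟨P, hP⟩ := h (2 * R)
  have hsub : ({i | ¬R ≤ ‖lam i‖} \ P).Subsingleton := by
    rintro j ⟨hj, hjP⟩ k ⟨hk, hkP⟩
    by_contra hjk
    simp only [mem_ofPred_eq, not_le, Real.norm_eq_abs] at hj hk
    linarith [hP hjP hkP hjk, abs_sub (lam j) (lam k)]
  exact hsub.finite.of_sdiff P.finite_toSet

lemma injective_sumElim_neg {ω : ι → ℝ} (hpos : ∀ k, 0 < ω k) (hinj : ω.Injective) :
    (Sum.elim ω (-ω)).Injective :=
  hinj.sumElim (neg_injective.comp hinj) fun j k => ((neg_neg_of_pos (hpos k)).trans (hpos j)).ne'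

lemma asymptoticallySeparated_sumElim_neg {ω : ℕ → ℝ} (hpos : ∀ k, 0 < ω k) (hmono : StrictMono ω)
    (hgap : Tendsto (fun k => ω (k + 1) - ω k) atTop atTop) :
    AsymptoticallySeparated (Sum.elim ω (-ω)) := by
  intro γ
  obtain ⟨m, hm⟩ := eventually_atTop.1 (hgap.eventually_ge_atTop γ)
  have hlt {j k : ℕ} (hj : m ≤ j) (hjk : j < k) : γ ≤ ω k - ω j := by
    linarith [hm j hj, hmono.monotone (Nat.succ_le_of_lt hjk)]
  have hsub {j k : ℕ} (hj : m < j) (hk : m < k) (hjk : j ≠ k) : γ ≤ |ω j - ω k| := by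
    rcases hjk.lt_or_gt with hjk | hkj
    · exact (hlt hj.le hjk).trans (abs_sub_comm (ω j) (ω k) ▸ le_abs_self _)
    · exact (hlt hk.le hkj).trans (le_abs_self _)
  have hadd {j : ℕ} (hj : m < j) (k : ℕ) : γ ≤ ω j + ω k := by
    linarith [hlt le_rfl hj, hpos m, hpos k]
  refine ⟨(Finset.range (m + 1)).disjSum (Finset.range (m + 1)), ?_⟩
  rintro (j | j) hj (k | k) hk hjk <;>
    simp only [mem_compl_iff, Finset.mem_coe, Finset.inl_mem_disjSum, Finset.inr_mem_disjSum,
      Finset.mem_range, not_lt, Nat.succ_le_iff] at hj hk <;>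
    simp only [Sum.elim_inl, Sum.elim_inr, Pi.neg_apply, sub_neg_eq_add]
  · exact hsub hj hk (by rintro rfl; exact hjk rfl)
  · exact (hadd hj k).trans (le_abs_self _)
  · rw [← neg_add', abs_neg]
    exact (hadd hj k).trans (le_abs_self _)
  · rw [neg_add_eq_sub]
    exact hsub hk hj (by rintro rfl; exact hjk rfl)

lemma AsymptoticallySeparated.exists_tail (hsep : AsymptoticallySeparated lam)
    (h0 : ∀ i, lam i ≠ 0) {T : ℝ} (hT : 0 < T) : ∃ P : Finset ι,
      IsBesselSequence ℂ (toL2 T ∘ expI ∘ fun i : {i // i ∉ P} => lam i) ∧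
      ∀ (M : Finset ℝ) (N : ℕ), (∀ i ∉ P, lam i ∉ M) →
        IsRieszFischerModulo (toL2 T ∘ expI ∘ fun i : {i // i ∉ P} => lam i)
          ((expPowSpan M N).map (toL2 T)) := by
  let Z := ∑' n : ℤ, 1 / (n : ℝ) ^ 2
  let γ := (√(192 * Z) + 1) / (T / 2)
  have hγ : 0 < γ := by positivity
  have hlarge : 192 * Z ≤ (γ * (T / 2)) ^ 2 := by
    rw [div_mul_cancel₀ _ (half_pos hT).ne']
    exact (Real.sqrt_le_left (by positivity)).1 (le_add_of_nonneg_right zero_le_one)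
  obtain ⟨P, hP⟩ := hsep γ
  have htail : Pairwise fun j k : {i // i ∉ P} => γ ≤ |lam j - lam k| := fun j k hjk =>
    hP j.2 k.2 (Subtype.coe_ne_coe.2 hjk)
  refine ⟨P, isBesselSequence_toL2_expI hγ hT htail, fun M N hM => ?_⟩
  exact (isRieszFischerModulo_toL2_expI hγ (half_pos hT) htail hlarge).toL2_expI_expPowSpan
    (hsep.tendsto_cocompact.comp Subtype.val_injective.tendsto_cofinite)
    (half_pos hT).le (half_lt_self hT) M N (fun i => hM i i.2) fun i => h0 i

theorem AsymptoticallySeparated.isRieszFischerModulo_toL2 (hsep : AsymptoticallySeparated lam)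
    (hinj : lam.Injective) (h0 : ∀ i, lam i ≠ 0) (N : ℕ) {T : ℝ} (hT : 0 < T) :
    IsRieszFischerModulo (𝕜 := ℂ)
      (toL2 T ∘ Sum.elim (expI ∘ lam) fun j : Fin N => powC j) ⊥ := by
  classical
  obtain ⟨P, hbessel, htail⟩ := hsep.exists_tail h0 hT
  let w : P ⊕ Fin N → C(ℝ, ℂ) := Sum.elim (expI ∘ fun i : P => lam i) fun j => powC j
  have hw : LinearIndependent ℂ (toL2 T ∘ w) := linearIndependent_toL2_sumElim_expI_powC
    (hinj.comp Subtype.val_injective) (fun i => h0 i.1) N hT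
  have hspan : Submodule.span ℂ (range (toL2 T ∘ w)) ≤
      (expPowSpan (P.image lam) N).map (toL2 T) := by
    rw [range_comp, ← Submodule.map_span]
    refine Submodule.map_mono (Submodule.span_mono ?_)
    rintro _ ⟨i | j, rfl⟩
    · exact .inl ⟨lam i, Finset.mem_image_of_mem lam i.2, rfl⟩
    · exact .inr ⟨j, j.2, rfl⟩
  have hmod := (htail (P.image lam) N fun i hi hi' => hi (hinj.mem_finset_image.1 hi')).mono hspan
  rw [← bot_sup_eq (Submodule.span ℂ _)] at hmod
  have hall := hmod.sumElim hbessel (.of_linearIndependent hw)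
  let index : {i // i ∉ P} ⊕ (P ⊕ Fin N) → ι ⊕ Fin N :=
    Sum.elim (fun i => .inl i) (Sum.map (fun i => i) id)
  have hindex : index.Surjective := by
    rintro (i | j)
    · by_cases hi : i ∈ P
      exacts [⟨.inr (.inl ⟨i, hi⟩), rfl⟩, ⟨.inl ⟨i, hi⟩, rfl⟩]
    · exact ⟨.inr (.inr j), rfl⟩
  refine .of_comp_surjective hindex ?_
  convert! hall using 1
  funext i
  rcases i with i | i | j <;> rfl

end AsymptoticSeparation

section Data

lemma exists_continuousLinearMap_lp_two {κ X : Type*} [SeminormedAddCommGroup X] [NormedSpace ℝ X]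
    (D : X →ₗ[ℝ] κ → ℂ) {K : ℝ} (hD : ∀ x F, ∑ i ∈ F, ‖D x i‖ ^ 2 ≤ K * ‖x‖ ^ 2) :
    ∃ A : X →L[ℝ] lp (fun _ : κ => ℂ) 2, ∀ x i, A x i = D x i := by
  have hmem (x : X) : Memℓp (D x) 2 := memℓp_gen' fun F => by
    simpa only [ENNReal.toReal_ofNat, Real.rpow_ofNat] using hD x F
  let A : X →ₗ[ℝ] lp (fun _ : κ => ℂ) 2 :=
    { toFun x := ⟨D x, hmem x⟩
      map_add' x y := lp.ext (map_add D x y)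
      map_smul' c x := lp.ext (map_smul D c x) }
  have hA (x : X) : ‖A x‖ ≤ √K * ‖x‖ := by
    refine lp.norm_le_of_forall_sum_le (by simp) (by positivity) fun F => ?_
    have hK : 0 ≤ K * ‖x‖ ^ 2 := by simpa using hD x ∅
    rw [← Real.sqrt_sq (norm_nonneg x), ← Real.sqrt_mul' K (sq_nonneg _), ENNReal.toReal_ofNat,
      Real.rpow_ofNat, Real.sq_sqrt hK]
    simp only [Real.rpow_ofNat]
    exact hD x F
  exact ⟨A.mkContinuous _ hA, fun _ _ => rfl⟩

open scoped ComplexConjugate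

/-- The moments prescribed for a complex control: against `e^{-iω_k t}` and `e^{iω_k t}` they are
conjugate to each other, as they have to be for a real control. -/
noncomputable def conjugateMoments (ι κ : Type*) :
    ((κ → ℝ) × lp (fun _ : ι => ℂ) 2) →ₗ[ℝ] (ι ⊕ ι) ⊕ κ → ℂ where
  toFun x := Sum.elim (Sum.elim (fun k => conj (x.2 k)) fun k => x.2 k) fun j => (x.1 j : ℂ)
  map_add' x y := by
    ext ((k | k) | j) <;> simp
  map_smul' c x := by
    ext ((k | k) | j) <;> simp

lemma sum_norm_conjugateMoments_sq_le {ι κ : Type*} [Fintype κ]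
    (x : (κ → ℝ) × lp (fun _ : ι => ℂ) 2) (F : Finset ((ι ⊕ ι) ⊕ κ)) :
    ∑ i ∈ F, ‖conjugateMoments ι κ x i‖ ^ 2 ≤ (2 + Fintype.card κ) * ‖x‖ ^ 2 := by
  have hlp (G : Finset ι) : ∑ k ∈ G, ‖x.2 k‖ ^ 2 ≤ ‖x‖ ^ 2 := by
    have := lp.sum_rpow_le_norm_rpow (p := 2) (by simp) x.2 G
    simp only [ENNReal.toReal_ofNat, Real.rpow_ofNat] at this
    exact this.trans (by gcongr; exact norm_snd_le x)
  have hfin (G : Finset κ) : ∑ j ∈ G, ‖x.1 j‖ ^ 2 ≤ Fintype.card κ * ‖x‖ ^ 2 := calc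
    _ ≤ ∑ j, ‖x.1 j‖ ^ 2 := Finset.sum_le_univ_sum_of_nonneg fun j => by positivity
    _ ≤ ∑ _ : κ, ‖x‖ ^ 2 := by
      gcongr with j
      exact (norm_le_pi_norm x.1 j).trans (norm_fst_le x)
    _ = _ := by simp
  obtain ⟨F', G, rfl⟩ : ∃ F' G, F = Finset.disjSum F' G :=
    ⟨_, _, Finset.toLeft_disjSum_toRight.symm⟩
  obtain ⟨G₁, G₂, rfl⟩ : ∃ G₁ G₂, F' = Finset.disjSum G₁ G₂ :=
    ⟨_, _, Finset.toLeft_disjSum_toRight.symm⟩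
  simp only [Finset.sum_disjSum, conjugateMoments, LinearMap.coe_mk, AddHom.coe_mk, Sum.elim_inl,
    Sum.elim_inr, RCLike.norm_conj, Complex.norm_real]
  linarith [hlp G₁, hlp G₂, hfin G]

end Data

section RealPart

open scoped ComplexConjugate

/-- The real part as a map from complex to real `L²(0, T)`. -/
noncomputable def reLp (T : ℝ) :
    Lp ℂ 2 (volume.restrict (Ioo 0 T)) →L[ℝ] Lp ℝ 2 (volume.restrict (Ioo 0 T)) :=
  Complex.reCLM.compLpL 2 (volume.restrict (Ioo 0 T))

lemma coeFn_reLp {T : ℝ} (u : Lp ℂ 2 (volume.restrict (Ioo 0 T))) :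
    ∀ᵐ t ∂volume.restrict (Ioo 0 T), reLp T u t = (u t).re :=
  Complex.reCLM.coeFn_compLpL u

lemma integral_reLp_mul {T : ℝ} (u : Lp ℂ 2 (volume.restrict (Ioo 0 T))) (f : C(ℝ, ℂ)) :
    ∫ t in Ioo 0 T, (reLp T u t : ℂ) * f t =
      (inner ℂ (toL2 T (star f)) u + conj (inner ℂ (toL2 T f) u)) / 2 := by
  have hint (g : C(ℝ, ℂ)) : IntegrableOn (fun t => conj (g t) * u t) (Ioo 0 T) := by
    refine (L2.integrable_inner (𝕜 := ℂ) (toL2 T g) u).congr ?_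
    filter_upwards [coeFn_toL2 T g] with t ht
    rw [ht, RCLike.inner_apply, mul_comm]
  have hre : (fun t => (reLp T u t : ℂ) * f t) =ᵐ[volume.restrict (Ioo 0 T)]
      fun t => (conj (star f t) * u t + conj (conj (f t) * u t)) / 2 := by
    filter_upwards [coeFn_reLp u] with t ht
    simp only [ht, ContinuousMap.star_apply, RCLike.star_def, map_mul, Complex.conj_conj,
      Complex.re_eq_add_conj]
    ring
  rw [integral_congr_ae hre, integral_div, integral_add (hint (star f)), integral_conj,
    ← inner_toL2, ← inner_toL2]
  exact (Complex.conjCLE : ℂ →L[ℝ] ℂ).integrable_comp (hint f)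

lemma integral_reLp_mul_expI {T μ : ℝ} {u : Lp ℂ 2 (volume.restrict (Ioo 0 T))} {z : ℂ}
    (hneg : inner ℂ (toL2 T (expI (-μ))) u = z) (hpos : inner ℂ (toL2 T (expI μ)) u = conj z) :
    ∫ t in Ioo 0 T, (reLp T u t : ℂ) * expI μ t = z := by
  have hstar : star (expI μ) = expI (-μ) := ContinuousMap.ext fun t => conj_expI μ t
  rw [integral_reLp_mul, hstar, hneg, hpos, Complex.conj_conj, add_self_div_two]

lemma integral_pow_mul_reLp {T x : ℝ} {j : ℕ} {u : Lp ℂ 2 (volume.restrict (Ioo 0 T))}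
    (h : inner ℂ (toL2 T (powC j)) u = (x : ℂ)) :
    ∫ t in Ioo 0 T, t ^ j * reLp T u t = x := by
  have hstar : star (powC j) = powC j := ContinuousMap.ext fun t => by simp [powC_apply]
  have hmul := integral_reLp_mul u (powC j)
  rw [hstar, h, Complex.conj_ofReal, add_self_div_two] at hmul
  refine Complex.ofReal_injective (hmul ▸ ?_)
  simp only [← integral_complex_ofReal, Complex.ofReal_mul, Complex.ofReal_pow, powC_apply,
    mul_comm]

end RealPart

theorem stmt_18_general {ι : Type*} {ω : ι → ℝ} (hinj : Function.Injective (Sum.elim ω (-ω)))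
    (hsep : AsymptoticallySeparated (Sum.elim ω (-ω))) (N : ℕ) {T : ℝ} (hT : 0 < T) :
    ∃ L : ((Fin N → ℝ) × lp (fun _ : ι => ℂ) 2) →L[ℝ] Lp ℝ 2 (volume.restrict (Ioo 0 T)),
      ∀ (dt : Fin N → ℝ) (d : lp (fun _ : ι => ℂ) 2),
        (∀ k, ∫ t in Ioo 0 T, (L (dt, d) t : ℂ) * Complex.exp (Complex.I * ω k * t) = d k) ∧
        ∀ k : Fin N, ∫ t in Ioo 0 T, t ^ (k : ℕ) * L (dt, d) t = dt k := by
  have h0 : ∀ i, Sum.elim ω (-ω) i ≠ 0 := by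
    rintro (k | k) hk <;>
      exact Sum.inl_ne_inr (@hinj (.inl k) (.inr k) (by simp_all))
  obtain ⟨S, hS⟩ := (hsep.isRieszFischerModulo_toL2 hinj h0 N hT).exists_moment_solution
  obtain ⟨A, hA⟩ := exists_continuousLinearMap_lp_two (conjugateMoments ι (Fin N))
    sum_norm_conjugateMoments_sq_le
  refine ⟨reLp T ∘L S.restrictScalars ℝ ∘L A, fun dt d => ?_⟩
  have hmoment (i) : inner ℂ _ (S (A (dt, d))) = conjugateMoments ι (Fin N) (dt, d) i :=
    (hS _ i).trans (hA _ i)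
  exact ⟨fun k => integral_reLp_mul_expI (hmoment (.inl (.inr k))) (hmoment (.inl (.inl k))),
    fun k => integral_pow_mul_reLp (hmoment (.inr k))⟩

/-- moment problem: for frequencies `0 < ω₁ < ω₂ < ⋯` with
`ω_{k+1} - ω_k → ∞`, there is a continuous linear map
`L : ℝ^N × ℓ²(ℕ*,ℂ) → L²((0,T),ℝ)` solving the combined trigonometric/polynomial
moment problem. -/
theorem stmt_18 (T : ℝ) (hT : 0 < T) (N : ℕ) (ω : ℕ → ℝ)
    (hpos : ∀ k, 0 < ω k) (hmono : StrictMono ω)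
    (hgap : Filter.Tendsto (fun k => ω (k + 1) - ω k) Filter.atTop Filter.atTop) :
    ∃ L : ((Fin N → ℝ) × (lp (fun _ : ℕ => ℂ) 2)) →L[ℝ]
        (MeasureTheory.Lp ℝ 2 (MeasureTheory.volume.restrict (Set.Ioo 0 T))),
      ∀ (dt : Fin N → ℝ) (d : lp (fun _ : ℕ => ℂ) 2),
        (∀ k : ℕ, (∫ t in Set.Ioo (0:ℝ) T,
            ((L (dt, d) t : ℝ) : ℂ) * Complex.exp (Complex.I * (ω k) * t)) = d k) ∧
        (∀ k : Fin N, (∫ t in Set.Ioo (0:ℝ) T,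
            t ^ (k : ℕ) * L (dt, d) t) = dt k) :=
  stmt_18_general (injective_sumElim_neg hpos hmono.injective)
    (asymptoticallySeparated_sumElim_neg hpos hmono hgap) N hT
end

section
/- Let $A$ denote the Dirichlet Laplacian on $(0,1)$, i.e. $A\varphi = -\varphi''$ with domain $H^2\cap H^1_0$. For $T>0$ and $f\in L^2((0,T), H^3\cap H^1_0(0,1))$, the function $G(t) := \int_0^t e^{iAs}f(s)\,ds$ belongs to $C^0([0,T], H^3_{(0)}(0,1))$ and satisfies $\|G\|_{L^\infty((0,T),H^3_{(0)})} \leq c_1(T)\|f\|_{L^2((0,T),H^3\cap H^1_0)}$, with $c_1(T)$ uniformly bounded for $T$ in bounded intervals. -/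
open MeasureTheory Set

/-- `n`-th coefficient of `f(s,·)` in the orthonormal sine basis
`e_n(x) = √2 sin((n+1)πx)` of `L²(0,1)` (eigenbasis of the Dirichlet Laplacian `A`). -/
noncomputable def coefA (f : ℝ → ℝ → ℂ) (n : ℕ) (s : ℝ) : ℂ :=
  ∫ x in (0:ℝ)..1, f s x * (Real.sqrt 2 * Real.sin (((n : ℝ) + 1) * Real.pi * x))

/-- `n`-th coefficient of `G(t) = ∫₀ᵗ e^{iAs} f(s) ds` in the sine basis:
`e^{iAs}` multiplies the `n`-th coefficient by `e^{i(n+1)²π²s}`. -/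
noncomputable def coefG (f : ℝ → ℝ → ℂ) (n : ℕ) (t : ℝ) : ℂ :=
  ∫ s in (0:ℝ)..t,
    Complex.exp (Complex.I * (((n : ℝ) + 1) ^ 2 * Real.pi ^ 2 * s)) * coefA f n s

/-- Squared `H³ ∩ H¹₀(0,1)`-type norm of `f(s,·)` (sum of the `L²` norms of `f` and its
first three spatial derivatives). -/
noncomputable def sobNormSq (f D1 D2 D3 : ℝ → ℝ → ℂ) (s : ℝ) : ℝ :=
  ∫ x in (0:ℝ)..1, (‖f s x‖ ^ 2 + ‖D1 s x‖ ^ 2 + ‖D2 s x‖ ^ 2 + ‖D3 s x‖ ^ 2)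

/-!
Three integrations by parts turn `((n+1)π)³` times the `n`-th sine coefficient of `f(s)` into the
boundary values `(-1)^(n+1) f''(s, 1) - f''(s, 0)` minus the `n`-th cosine coefficient of
`f'''(s)`, up to a factor `√2`. The boundary values do not decay in `n`, but their integrals in time
against `e^{i(n+1)²π²s}` are Fourier coefficients at distinct integer multiples of a single
frequency, hence square summable by Bessel's inequality on a period containing `(0, T)`: this is the
smoothing effect. The cosine coefficients are square summable by Bessel's inequality in space, and
the Cauchy–Schwarz inequality in time takes care of their integrals. Applied on `(t, t')`, the same
estimate gives continuity in time.
-/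

open Filter Topology

section Bessel

lemma sq_norm_integral_le {α E : Type*} {m : MeasurableSpace α} {μ : Measure α}
    [IsFiniteMeasure μ] [NormedAddCommGroup E] [NormedSpace ℝ E] {u : α → E} (hu : MemLp u 2 μ) :
    ‖∫ x, u x ∂μ‖ ^ 2 ≤ μ.real univ * ∫ x, ‖u x‖ ^ 2 ∂μ := by
  have hnonneg : 0 ≤ ∫ x, ‖u x‖ ^ 2 ∂μ := integral_nonneg fun x => sq_nonneg ‖u x‖
  have holder : ∫ x, ‖u x‖ ∂μ ≤ √(μ.real univ) * √(∫ x, ‖u x‖ ^ 2 ∂μ) := by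
    simpa [Real.sqrt_eq_rpow, mul_comm] using
      integral_mul_norm_le_Lp_mul_Lq Real.HolderConjugate.two_two (f := fun x => ‖u x‖)
        (g := fun _ => (1 : ℝ)) (by simpa using hu.norm) (memLp_const _)
  calc ‖∫ x, u x ∂μ‖ ^ 2 ≤ (√(μ.real univ) * √(∫ x, ‖u x‖ ^ 2 ∂μ)) ^ 2 := by
        gcongr
        exact (norm_integral_le_integral_norm u).trans holder
    _ = μ.real univ * ∫ x, ‖u x‖ ^ 2 ∂μ := by
        rw [mul_pow, Real.sq_sqrt measureReal_nonneg, Real.sq_sqrt hnonneg]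

lemma sum_sq_norm_integral_le {α E ι : Type*} {m : MeasurableSpace α} {μ : Measure α}
    [IsFiniteMeasure μ] [NormedAddCommGroup E] [NormedSpace ℝ E] {u : ι → α → E}
    (hu : ∀ i, MemLp (u i) 2 μ) (t : Finset ι) :
    ∑ i ∈ t, ‖∫ x, u i x ∂μ‖ ^ 2 ≤ μ.real univ * ∫ x, ∑ i ∈ t, ‖u i x‖ ^ 2 ∂μ := by
  rw [integral_finsetSum t fun i _ => (memLp_two_iff_integrable_sq_norm (hu i).1).1 (hu i),
    Finset.mul_sum]
  exact Finset.sum_le_sum fun i _ => sq_norm_integral_le (hu i)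

lemma sq_norm_fourierCoeffOn_neg {c L : ℝ} (hL : c < c + L) (g : ℝ → ℂ) (n : ℤ) :
    ‖fourierCoeffOn hL g (-n)‖ ^ 2 =
      (L ^ 2)⁻¹ *
        ‖∫ s in Ioc c (c + L), Complex.exp (2 * Real.pi * Complex.I * n * s / L) * g s‖ ^ 2 := by
  rw [fourierCoeffOn_eq_integral, intervalIntegral.integral_of_le hL.le, norm_smul, mul_pow]
  simp

lemma sum_sq_norm_integral_exp_mul_le_of_period {ι : Type*} {c ω : ℝ} (hω : 0 < ω) {h : ℝ → ℂ}
    (hh : MemLp h 2 (volume.restrict (Ioc c (c + 2 * Real.pi / ω)))) {k : ι → ℤ}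
    (hk : Function.Injective k) (t : Finset ι) :
    ∑ i ∈ t, ‖∫ s in Ioc c (c + 2 * Real.pi / ω), Complex.exp (Complex.I * (k i * ω * s)) * h s‖ ^ 2
      ≤ 2 * Real.pi / ω * ∫ s in Ioc c (c + 2 * Real.pi / ω), ‖h s‖ ^ 2 := by
  set L := 2 * Real.pi / ω with hL
  have hLpos : 0 < L := by positivity
  have hcL : c < c + L := by linarith
  have exponent (n : ℤ) (s : ℝ) :
      2 * Real.pi * Complex.I * n * s / L = Complex.I * (n * ω * s) := by
    have hωC : (ω : ℂ) ≠ 0 := by exact_mod_cast hω.ne'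
    have hπC : (Real.pi : ℂ) ≠ 0 := by exact_mod_cast Real.pi_ne_zero
    rw [hL]
    push_cast
    field_simp
  have bessel :
      ∑ i ∈ t, ‖fourierCoeffOn hcL h (-k i)‖ ^ 2 ≤ L⁻¹ * ∫ s in Ioc c (c + L), ‖h s‖ ^ 2 := by
    have parseval := hasSum_sq_fourierCoeffOn hcL hh
    rw [intervalIntegral.integral_of_le hcL.le, add_sub_cancel_left, smul_eq_mul] at parseval
    simpa using sum_le_hasSum (t.map ⟨_, neg_injective.comp hk⟩) (fun _ _ => sq_nonneg _) parseval
  simp_rw [sq_norm_fourierCoeffOn_neg, exponent, ← Finset.mul_sum] at bessel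
  rw [inv_mul_le_iff₀ (by positivity)] at bessel
  calc _ ≤ _ := bessel
    _ = L * ∫ s in Ioc c (c + L), ‖h s‖ ^ 2 := by field_simp

lemma sum_sq_norm_integral_exp_mul_le {ι : Type*} {c ω : ℝ} (hω : 0 < ω) {A : Set ℝ}
    (hA : MeasurableSet A) (hAc : A ⊆ Ioc c (c + 2 * Real.pi / ω)) {h : ℝ → ℂ}
    (hh : MemLp h 2 (volume.restrict A)) {k : ι → ℤ} (hk : Function.Injective k) (t : Finset ι) :
    ∑ i ∈ t, ‖∫ s in A, Complex.exp (Complex.I * (k i * ω * s)) * h s‖ ^ 2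
      ≤ 2 * Real.pi / ω * ∫ s in A, ‖h s‖ ^ 2 := by
  have hind : MemLp (A.indicator h) 2 (volume.restrict (Ioc c (c + 2 * Real.pi / ω))) :=
    ((memLp_indicator_iff_restrict hA).2 hh).restrict _
  have hmul (i : ι) : (fun s : ℝ => Complex.exp (Complex.I * (k i * ω * s)) * A.indicator h s) =
      A.indicator fun s : ℝ => Complex.exp (Complex.I * (k i * ω * s)) * h s := by
    ext s
    by_cases hs : s ∈ A <;> simp [hs]
  have hsq : (fun s => ‖A.indicator h s‖ ^ 2) = A.indicator fun s => ‖h s‖ ^ 2 := by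
    ext s
    by_cases hs : s ∈ A <;> simp [hs]
  simpa only [hmul, hsq, setIntegral_indicator hA, inter_eq_right.2 hAc] using
    sum_sq_norm_integral_exp_mul_le_of_period hω hind hk t

end Bessel

section UnitInterval

lemma memLp_Ioc_of_continuousOn_Icc {E : Type*} [NormedAddCommGroup E] {g : ℝ → E} {a b : ℝ}
    (hg : ContinuousOn g (Icc a b)) (p : ENNReal) : MemLp g p (volume.restrict (Ioc a b)) := by
  obtain ⟨C, hC⟩ := isCompact_Icc.exists_bound_of_continuousOn hg
  have hg' := hg.mono Ioc_subset_Icc_self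
  exact .of_bound (hg'.aestronglyMeasurable measurableSet_Ioc) C <|
    ae_restrict_of_forall_mem measurableSet_Ioc fun x hx => hC x (Ioc_subset_Icc_self hx)

/-- The cosine coefficient of a function on `(0, 1)` at the same frequency `(n + 1)π` as the
`n`-th Dirichlet mode. -/
noncomputable def cosCoef (g : ℝ → ℂ) (n : ℕ) : ℂ :=
  ∫ x in (0 : ℝ)..1, g x * (Real.cos (((n : ℝ) + 1) * Real.pi * x) : ℂ)

lemma cosCoef_eq_integral_exp {g : ℝ → ℂ} (hg : IntervalIntegrable g volume 0 1) (n : ℕ) :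
    cosCoef g n = (1 / 2) *
      ((∫ x in Ioc (0 : ℝ) 1, Complex.exp (Complex.I * (((n + 1 : ℤ) : ℂ) * Real.pi * x)) * g x) +
        ∫ x in Ioc (0 : ℝ) 1,
          Complex.exp (Complex.I * (((-(n + 1) : ℤ) : ℂ) * Real.pi * x)) * g x) := by
  have integrable (k : ℤ) : IntervalIntegrable
      (fun x : ℝ => Complex.exp (Complex.I * (k * Real.pi * x)) * g x) volume 0 1 :=
    hg.continuousOn_mul (by fun_prop)
  simp_rw [← intervalIntegral.integral_of_le zero_le_one]
  rw [← intervalIntegral.integral_add (integrable _) (integrable _),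
    ← intervalIntegral.integral_const_mul]
  refine intervalIntegral.integral_congr fun x _ => ?_
  simp only [Complex.ofReal_cos, Complex.cos]
  push_cast
  ring_nf

lemma sum_sq_norm_cosCoef_le {g : ℝ → ℂ} (hg : MemLp g 2 (volume.restrict (Ioc 0 1)))
    (t : Finset ℕ) : ∑ n ∈ t, ‖cosCoef g n‖ ^ 2 ≤ 2 * ∫ x in (0 : ℝ)..1, ‖g x‖ ^ 2 := by
  have hgi : IntervalIntegrable g volume 0 1 :=
    (intervalIntegrable_iff_integrableOn_Ioc_of_le zero_le_one).2 (hg.integrable one_le_two)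
  have bessel {k : ℕ → ℤ} (hk : Function.Injective k) := sum_sq_norm_integral_exp_mul_le
    Real.pi_pos measurableSet_Ioc (Ioc_subset_Ioc_right (by norm_num [Real.pi_ne_zero]) :
      Ioc (0 : ℝ) 1 ⊆ Ioc 0 (0 + 2 * Real.pi / Real.pi)) hg hk t
  have bessel_pos := bessel (k := fun n => n + 1) fun m n h => by simpa using h
  have bessel_neg := bessel (k := fun n => -(n + 1)) fun m n h => by simpa using h
  rw [mul_div_cancel_right₀ _ Real.pi_ne_zero] at bessel_pos bessel_neg
  have half_add_sq (z w : ℂ) : ‖(1 / 2) * (z + w)‖ ^ 2 ≤ (1 / 2) * (‖z‖ ^ 2 + ‖w‖ ^ 2) := by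
    rw [norm_mul, mul_pow]
    have := (pow_le_pow_left₀ (norm_nonneg _) (norm_add_le z w) 2).trans add_sq_le
    norm_num
    linarith
  rw [intervalIntegral.integral_of_le zero_le_one]
  simp_rw [cosCoef_eq_integral_exp hgi]
  refine (Finset.sum_le_sum fun n _ => half_add_sq _ _).trans ?_
  rw [← Finset.mul_sum, Finset.sum_add_distrib]
  linarith

lemma tendsto_cosCoef_atTop {g : ℝ → ℂ} (hg : MemLp g 2 (volume.restrict (Ioc 0 1))) :
    Tendsto (cosCoef g) atTop (𝓝 0) := by
  have hsq := (summable_of_sum_le (fun n => sq_nonneg ‖cosCoef g n‖)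
    (sum_sq_norm_cosCoef_le hg)).tendsto_atTop_zero
  rw [tendsto_zero_iff_norm_tendsto_zero]
  simpa using hsq.sqrt

lemma mul_integral_mul_sin {a b : ℝ} {g g' : ℝ → ℂ} (hg : ∀ x ∈ uIcc a b, HasDerivAt g (g' x) x)
    (hg' : IntervalIntegrable g' volume a b) (w : ℝ) :
    (w : ℂ) * ∫ x in a..b, g x * (Real.sin (w * x) : ℂ) =
      g a * Real.cos (w * a) - g b * Real.cos (w * b) +
        ∫ x in a..b, g' x * (Real.cos (w * x) : ℂ) := by
  have hcos (x : ℝ) : HasDerivAt (fun x : ℝ => (Real.cos (w * x) : ℂ))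
      (-(w * Real.sin (w * x) : ℝ)) x := by
    simpa [mul_comm] using (((hasDerivAt_id x).const_mul w).cos).ofReal_comp
  have parts := intervalIntegral.integral_mul_deriv_eq_deriv_mul hg (fun x _ => hcos x) hg'
    (Continuous.intervalIntegrable (by fun_prop) _ _)
  have pull : ∫ x in a..b, g x * -((w * Real.sin (w * x) : ℝ) : ℂ) =
      -(w * ∫ x in a..b, g x * (Real.sin (w * x) : ℂ)) := by
    rw [← intervalIntegral.integral_const_mul, ← intervalIntegral.integral_neg]
    congr 1 with x
    push_cast
    ring
  rw [pull] at parts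
  linear_combination -parts

lemma mul_integral_mul_cos {a b : ℝ} {g g' : ℝ → ℂ} (hg : ∀ x ∈ uIcc a b, HasDerivAt g (g' x) x)
    (hg' : IntervalIntegrable g' volume a b) (w : ℝ) :
    (w : ℂ) * ∫ x in a..b, g x * (Real.cos (w * x) : ℂ) =
      g b * Real.sin (w * b) - g a * Real.sin (w * a) -
        ∫ x in a..b, g' x * (Real.sin (w * x) : ℂ) := by
  have hsin (x : ℝ) : HasDerivAt (fun x : ℝ => (Real.sin (w * x) : ℂ))
      (w * Real.cos (w * x) : ℝ) x := by
    simpa [mul_comm] using (((hasDerivAt_id x).const_mul w).sin).ofReal_comp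
  have parts := intervalIntegral.integral_mul_deriv_eq_deriv_mul hg (fun x _ => hsin x) hg'
    (Continuous.intervalIntegrable (by fun_prop) _ _)
  rw [← parts, ← intervalIntegral.integral_const_mul]
  congr 1 with x
  push_cast
  ring

lemma norm_le_integral_norm_add_norm_deriv {E : Type*} [NormedAddCommGroup E] [NormedSpace ℝ E]
    [CompleteSpace E] {g g' : ℝ → E} (hg : ∀ x ∈ Icc (0 : ℝ) 1, HasDerivAt g (g' x) x)
    (hg' : IntervalIntegrable g' volume 0 1) {y : ℝ} (hy : y ∈ Icc (0 : ℝ) 1) :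
    ‖g y‖ ≤ ∫ x in (0 : ℝ)..1, (‖g x‖ + ‖g' x‖) := by
  have hunit : uIcc (0 : ℝ) 1 = Icc 0 1 := uIcc_of_le zero_le_one
  have hgi : IntervalIntegrable (fun x => ‖g x‖) volume 0 1 :=
    ContinuousOn.intervalIntegrable fun x hx =>
      (hg x (hunit ▸ hx)).continuousAt.norm.continuousWithinAt
  have oscillation (x : ℝ) (hx : x ∈ Icc (0 : ℝ) 1) :
      ‖g y - g x‖ ≤ ∫ z in (0 : ℝ)..1, ‖g' z‖ := by
    have hxy : uIcc x y ⊆ uIcc 0 1 := uIcc_subset_uIcc (hunit ▸ hx) (hunit ▸ hy)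
    calc ‖g y - g x‖ = ‖∫ z in x..y, g' z‖ := by
          rw [intervalIntegral.integral_eq_sub_of_hasDerivAt (fun z hz => hg z (hunit ▸ hxy hz))
            (hg'.mono_set hxy)]
      _ ≤ |∫ z in x..y, ‖g' z‖| := intervalIntegral.norm_integral_le_abs_integral_norm
      _ ≤ |∫ z in (0 : ℝ)..1, ‖g' z‖| := intervalIntegral.abs_integral_mono_interval
          (uIoc_subset_uIoc_of_uIcc_subset_uIcc hxy) (ae_of_all _ fun z => norm_nonneg _) hg'.norm
      _ = ∫ z in (0 : ℝ)..1, ‖g' z‖ :=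
          abs_of_nonneg (intervalIntegral.integral_nonneg zero_le_one fun z _ => norm_nonneg _)
  have averaged : ‖g y‖ ≤ ∫ x in (0 : ℝ)..1, (‖g x‖ + ∫ z in (0 : ℝ)..1, ‖g' z‖) := by
    calc ‖g y‖ = ∫ _ in (0 : ℝ)..1, ‖g y‖ := by simp
      _ ≤ _ := intervalIntegral.integral_mono_on zero_le_one (by simp) (hgi.add (by simp))
        fun x hx => by linarith [norm_le_insert' (g y) (g x), oscillation x hx]
  rw [intervalIntegral.integral_add hgi (by simp)] at averaged
  rw [intervalIntegral.integral_add hgi hg'.norm]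
  simpa using averaged

lemma sq_norm_le_integral_sq_norm_add_deriv {E : Type*} [NormedAddCommGroup E] [NormedSpace ℝ E]
    [CompleteSpace E] {g g' : ℝ → E} (hg : ∀ x ∈ Icc (0 : ℝ) 1, HasDerivAt g (g' x) x)
    (hg' : MemLp g' 2 (volume.restrict (Ioc 0 1))) {y : ℝ} (hy : y ∈ Icc (0 : ℝ) 1) :
    ‖g y‖ ^ 2 ≤ 2 * ∫ x in (0 : ℝ)..1, (‖g x‖ ^ 2 + ‖g' x‖ ^ 2) := by
  have hgL : MemLp g 2 (volume.restrict (Ioc 0 1)) := memLp_Ioc_of_continuousOn_Icc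
    (fun x hx => (hg x hx).continuousAt.continuousWithinAt) 2
  have hg'i : IntervalIntegrable g' volume 0 1 :=
    (intervalIntegrable_iff_integrableOn_Ioc_of_le zero_le_one).2 (hg'.integrable one_le_two)
  have hsum : MemLp (fun x => ‖g x‖ + ‖g' x‖) 2 (volume.restrict (Ioc 0 1)) := hgL.norm.add hg'.norm
  have sup_bound := norm_le_integral_norm_add_norm_deriv hg hg'i hy
  rw [intervalIntegral.integral_of_le zero_le_one] at sup_bound ⊢
  calc ‖g y‖ ^ 2 ≤ ‖∫ x in Ioc (0 : ℝ) 1, (‖g x‖ + ‖g' x‖)‖ ^ 2 := by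
        gcongr
        exact sup_bound.trans (le_abs_self _)
    _ ≤ ∫ x in Ioc (0 : ℝ) 1, ‖‖g x‖ + ‖g' x‖‖ ^ 2 := by simpa using sq_norm_integral_le hsum
    _ ≤ ∫ x in Ioc (0 : ℝ) 1, 2 * (‖g x‖ ^ 2 + ‖g' x‖ ^ 2) := by
        refine integral_mono hsum.integrable_norm_pow' ?_ fun x => ?_
        · exact ((hgL.integrable_norm_pow two_ne_zero).add
            (hg'.integrable_norm_pow two_ne_zero)).const_mul 2
        · simpa using add_sq_le
    _ = 2 * ∫ x in Ioc (0 : ℝ) 1, (‖g x‖ ^ 2 + ‖g' x‖ ^ 2) := integral_const_mul _ _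

end UnitInterval

section ClassicalDirichlet

/-- `f` is a classical element of `H³ ∩ H¹₀(0, 1)`: at every point of `[0, 1]` it is three times
differentiable (as a function on `ℝ`) with successive derivatives `D1`, `D2`, `D3`, the last one
continuous on `[0, 1]`, and it vanishes at both endpoints. -/
structure IsC3Dirichlet (f D1 D2 D3 : ℝ → ℂ) : Prop where
  hasDerivAt : ∀ x ∈ Icc (0 : ℝ) 1, HasDerivAt f (D1 x) x
  hasDerivAt_first : ∀ x ∈ Icc (0 : ℝ) 1, HasDerivAt D1 (D2 x) x
  hasDerivAt_second : ∀ x ∈ Icc (0 : ℝ) 1, HasDerivAt D2 (D3 x) x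
  continuousOn_third : ContinuousOn D3 (Icc 0 1)
  eq_zero_left : f 0 = 0
  eq_zero_right : f 1 = 0

variable {f D1 D2 D3 : ℝ → ℝ → ℂ} {s : ℝ}

lemma IsC3Dirichlet.continuousOn (h : IsC3Dirichlet (f s) (D1 s) (D2 s) (D3 s)) :
    ContinuousOn (f s) (Icc 0 1) :=
  fun x hx => (h.hasDerivAt x hx).continuousAt.continuousWithinAt

lemma IsC3Dirichlet.continuousOn_first (h : IsC3Dirichlet (f s) (D1 s) (D2 s) (D3 s)) :
    ContinuousOn (D1 s) (Icc 0 1) :=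
  fun x hx => (h.hasDerivAt_first x hx).continuousAt.continuousWithinAt

lemma IsC3Dirichlet.continuousOn_second (h : IsC3Dirichlet (f s) (D1 s) (D2 s) (D3 s)) :
    ContinuousOn (D2 s) (Icc 0 1) :=
  fun x hx => (h.hasDerivAt_second x hx).continuousAt.continuousWithinAt

lemma IsC3Dirichlet.cube_mul_coefA (h : IsC3Dirichlet (f s) (D1 s) (D2 s) (D3 s)) (n : ℕ) :
    ((((n + 1) * Real.pi) ^ 3 : ℝ) : ℂ) * coefA f n s =
      √2 * ((-1) ^ (n + 1) * D2 s 1 - D2 s 0 - cosCoef (D3 s) n) := by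
  set w : ℝ := (n + 1) * Real.pi with hw
  have hunit : uIcc (0 : ℝ) 1 = Icc 0 1 := uIcc_of_le zero_le_one
  have sin_w : Real.sin w = 0 := by simpa [hw] using Real.sin_nat_mul_pi (n + 1)
  have cos_w : Real.cos w = (-1) ^ (n + 1) := by
    simpa [hw] using Real.cos_nat_mul_pi (n + 1)
  have parts_f := mul_integral_mul_sin (hunit.symm ▸ h.hasDerivAt)
    (hunit.symm ▸ h.continuousOn_first).intervalIntegrable w
  have parts_D1 := mul_integral_mul_cos (hunit.symm ▸ h.hasDerivAt_first)
    (hunit.symm ▸ h.continuousOn_second).intervalIntegrable w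
  have parts_D2 := mul_integral_mul_sin (hunit.symm ▸ h.hasDerivAt_second)
    (hunit.symm ▸ h.continuousOn_third).intervalIntegrable w
  have hcoef : coefA f n s = √2 * ∫ x in (0 : ℝ)..1, f s x * (Real.sin (w * x) : ℂ) := by
    rw [coefA, ← intervalIntegral.integral_const_mul]
    congr 1 with x
    ring
  have hcos : cosCoef (D3 s) n = ∫ x in (0 : ℝ)..1, D3 s x * (Real.cos (w * x) : ℂ) := rfl
  simp only [h.eq_zero_left, h.eq_zero_right, mul_zero, mul_one, zero_mul, sub_zero, zero_add,
    sin_w, cos_w, Real.cos_zero, Real.sin_zero, Complex.ofReal_zero, Complex.ofReal_one,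
    zero_sub] at parts_f parts_D1 parts_D2
  rw [hcoef, hcos]
  push_cast at parts_f parts_D1 parts_D2 ⊢
  linear_combination (√2 : ℂ) * (w ^ 2 * parts_f + w * parts_D1 - parts_D2)

lemma IsC3Dirichlet.integral_le_sobNormSq (h : IsC3Dirichlet (f s) (D1 s) (D2 s) (D3 s))
    {φ : ℝ → ℝ} (hφ : ∀ x, 0 ≤ φ x)
    (hle : ∀ x, φ x ≤ ‖f s x‖ ^ 2 + ‖D1 s x‖ ^ 2 + ‖D2 s x‖ ^ 2 + ‖D3 s x‖ ^ 2) :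
    ∫ x in (0 : ℝ)..1, φ x ≤ sobNormSq f D1 D2 D3 s := by
  have hcont : ContinuousOn
      (fun x => ‖f s x‖ ^ 2 + ‖D1 s x‖ ^ 2 + ‖D2 s x‖ ^ 2 + ‖D3 s x‖ ^ 2) (Icc 0 1) :=
    (((h.continuousOn.norm.pow 2).add (h.continuousOn_first.norm.pow 2)).add
      (h.continuousOn_second.norm.pow 2)).add (h.continuousOn_third.norm.pow 2)
  rw [sobNormSq, intervalIntegral.integral_of_le zero_le_one,
    intervalIntegral.integral_of_le zero_le_one]
  exact integral_mono_of_nonneg (ae_of_all _ hφ)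
    (hcont.integrableOn_Icc.mono_set Ioc_subset_Icc_self) (ae_of_all _ hle)

lemma IsC3Dirichlet.sq_norm_second_le (h : IsC3Dirichlet (f s) (D1 s) (D2 s) (D3 s)) {y : ℝ}
    (hy : y ∈ Icc (0 : ℝ) 1) : ‖D2 s y‖ ^ 2 ≤ 2 * sobNormSq f D1 D2 D3 s := by
  refine (sq_norm_le_integral_sq_norm_add_deriv h.hasDerivAt_second
    (memLp_Ioc_of_continuousOn_Icc h.continuousOn_third 2) hy).trans ?_
  gcongr
  exact h.integral_le_sobNormSq (fun x => by positivity) fun x => by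
    linarith [sq_nonneg ‖f s x‖, sq_nonneg ‖D1 s x‖]

lemma IsC3Dirichlet.sum_sq_norm_cosCoef_third_le (h : IsC3Dirichlet (f s) (D1 s) (D2 s) (D3 s))
    (t : Finset ℕ) : ∑ n ∈ t, ‖cosCoef (D3 s) n‖ ^ 2 ≤ 2 * sobNormSq f D1 D2 D3 s := by
  refine (sum_sq_norm_cosCoef_le
    (memLp_Ioc_of_continuousOn_Icc h.continuousOn_third 2) t).trans ?_
  gcongr
  exact h.integral_le_sobNormSq (fun x => by positivity) fun x => by
    linarith [sq_nonneg ‖f s x‖, sq_nonneg ‖D1 s x‖, sq_nonneg ‖D2 s x‖]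

lemma sobNormSq_nonneg (f D1 D2 D3 : ℝ → ℝ → ℂ) (s : ℝ) : 0 ≤ sobNormSq f D1 D2 D3 s :=
  intervalIntegral.integral_nonneg zero_le_one fun x _ => by positivity

end ClassicalDirichlet

section SchrodingerPhase

/-- The factor `e^{i(n+1)²π²s}` by which `e^{iAs}` acts on the `n`-th sine mode. -/
noncomputable def schrodingerPhase (n : ℕ) (s : ℝ) : ℂ :=
  Complex.exp (Complex.I * (((n : ℝ) + 1) ^ 2 * Real.pi ^ 2 * s))

lemma continuous_schrodingerPhase (n : ℕ) : Continuous (schrodingerPhase n) := by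
  unfold schrodingerPhase
  fun_prop

lemma norm_schrodingerPhase (n : ℕ) (s : ℝ) : ‖schrodingerPhase n s‖ = 1 := by
  have exponent : Complex.I * (((n : ℝ) + 1) ^ 2 * Real.pi ^ 2 * s) =
      ((((n : ℝ) + 1) ^ 2 * Real.pi ^ 2 * s : ℝ) : ℂ) * Complex.I := by
    push_cast
    ring
  rw [schrodingerPhase, exponent, Complex.norm_exp_ofReal_mul_I]

lemma memLp_schrodingerPhase_mul {μ : Measure ℝ} {p : ENNReal} {h : ℝ → ℂ} (hh : MemLp h p μ)
    (n : ℕ) : MemLp (fun s => schrodingerPhase n s * h s) p μ :=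
  hh.congr_norm ((continuous_schrodingerPhase n).aestronglyMeasurable.mul hh.1)
    (ae_of_all _ fun s => by rw [norm_mul, norm_schrodingerPhase, one_mul])

-- The frequencies `(n+1)²π²` are distinct integer multiples of `π²/M`, so the phases belong to the
-- Fourier basis of an interval of length `2M/π`.
lemma sum_sq_norm_integral_schrodingerPhase_mul_le {a b : ℝ} {M : ℕ} (hM : 0 < M)
    (hab : Real.pi * (b - a) ≤ 2 * M) {h : ℝ → ℂ} (hh : MemLp h 2 (volume.restrict (Ioc a b)))
    (t : Finset ℕ) :
    ∑ n ∈ t, ‖∫ s in Ioc a b, schrodingerPhase n s * h s‖ ^ 2 ≤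
      2 * M / Real.pi * ∫ s in Ioc a b, ‖h s‖ ^ 2 := by
  have : (0 : ℝ) < M := Nat.cast_pos.2 hM
  have hperiod : 2 * Real.pi / (Real.pi ^ 2 / M) = 2 * M / Real.pi := by
    field_simp
  have hsub : Ioc a b ⊆ Ioc a (a + 2 * Real.pi / (Real.pi ^ 2 / M)) := by
    refine Ioc_subset_Ioc_right ?_
    rw [hperiod, ← sub_le_iff_le_add', le_div_iff₀ Real.pi_pos]
    linarith
  have hinj : Function.Injective fun n : ℕ => (M : ℤ) * ((n : ℤ) + 1) ^ 2 := by
    intro m n hmn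
    have hsq := mul_left_cancel₀ (by exact_mod_cast hM.ne') hmn
    simpa using (sq_eq_sq₀ (by positivity) (by positivity)).1 hsq
  have hphase (n : ℕ) (s : ℝ) : schrodingerPhase n s = Complex.exp (Complex.I *
      (((M : ℤ) * ((n : ℤ) + 1) ^ 2 : ℤ) * (Real.pi ^ 2 / M : ℝ) * s)) := by
    have hMC : (M : ℂ) ≠ 0 := by exact_mod_cast hM.ne'
    rw [schrodingerPhase]
    push_cast
    congr 2
    field_simp
  simp_rw [hphase]
  exact hperiod ▸ sum_sq_norm_integral_exp_mul_le (by positivity) measurableSet_Ioc hsub hh hinj t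

lemma sq_norm_sub_sub_le {E : Type*} [SeminormedAddCommGroup E] (x y z : E) :
    ‖x - y - z‖ ^ 2 ≤ 3 * (‖x‖ ^ 2 + ‖y‖ ^ 2 + ‖z‖ ^ 2) := by
  have htri : ‖x - y - z‖ ≤ ‖x‖ + ‖y‖ + ‖z‖ :=
    (norm_sub_le _ _).trans (by gcongr; exact norm_sub_le _ _)
  calc ‖x - y - z‖ ^ 2 ≤ (‖x‖ + ‖y‖ + ‖z‖) ^ 2 := by gcongr
    _ ≤ 3 * (‖x‖ ^ 2 + ‖y‖ ^ 2 + ‖z‖ ^ 2) := by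
      linarith [sq_nonneg (‖x‖ - ‖y‖), sq_nonneg (‖x‖ - ‖z‖), sq_nonneg (‖y‖ - ‖z‖)]

lemma integral_schrodingerPhase_mul_alternating_sub {μ : Measure ℝ} {P Q R : ℝ → ℂ}
    (hP : Integrable P μ) (hQ : Integrable Q μ) (hR : Integrable R μ) (n : ℕ) :
    ∫ s, schrodingerPhase n s * ((-1) ^ (n + 1) * P s - Q s - R s) ∂μ =
      (-1) ^ (n + 1) * (∫ s, schrodingerPhase n s * P s ∂μ) -
        (∫ s, schrodingerPhase n s * Q s ∂μ) - ∫ s, schrodingerPhase n s * R s ∂μ := by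
  have integrable {h : ℝ → ℂ} (hh : Integrable h μ) :
      Integrable (fun s => schrodingerPhase n s * h s) μ :=
    memLp_one_iff_integrable.1 (memLp_schrodingerPhase_mul (memLp_one_iff_integrable.2 hh) n)
  have hPn := (integrable hP).const_mul ((-1) ^ (n + 1))
  have hPQn : Integrable (fun s => (-1) ^ (n + 1) * (schrodingerPhase n s * P s) -
      schrodingerPhase n s * Q s) μ := hPn.sub (integrable hQ)
  rw [← integral_const_mul, ← integral_sub hPn (integrable hQ), ← integral_sub hPQn (integrable hR)]
  congr 1 with s
  ring

lemma sum_sq_norm_integral_schrodingerPhase_mul_family_le {a b L : ℝ} (hL : 0 ≤ L)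
    (hab : b - a ≤ L) {C : ℕ → ℝ → ℂ} (hC : ∀ n, MemLp (C n) 2 (volume.restrict (Ioc a b)))
    (t : Finset ℕ) :
    ∑ n ∈ t, ‖∫ s in Ioc a b, schrodingerPhase n s * C n s‖ ^ 2 ≤
      L * ∫ s in Ioc a b, ∑ n ∈ t, ‖C n s‖ ^ 2 := by
  have hlen : (volume.restrict (Ioc a b)).real univ ≤ L := by
    rw [measureReal_restrict_apply_univ, Real.volume_real_Ioc]
    exact max_le hab hL
  refine (sum_sq_norm_integral_le (fun n => memLp_schrodingerPhase_mul (hC n) n) t).trans ?_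
  simp only [norm_mul, norm_schrodingerPhase, one_mul]
  gcongr

lemma sum_sq_norm_integral_schrodingerPhase_mul_alternating_sub_le {a b : ℝ} {M : ℕ} (hM : 0 < M)
    (hab : Real.pi * (b - a) ≤ 2 * M) {P Q : ℝ → ℂ} {C : ℕ → ℝ → ℂ}
    (hP : MemLp P 2 (volume.restrict (Ioc a b))) (hQ : MemLp Q 2 (volume.restrict (Ioc a b)))
    (hC : ∀ n, MemLp (C n) 2 (volume.restrict (Ioc a b))) (t : Finset ℕ) :
    ∑ n ∈ t, ‖∫ s in Ioc a b, schrodingerPhase n s * ((-1) ^ (n + 1) * P s - Q s - C n s)‖ ^ 2 ≤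
      3 * (2 * M / Real.pi) * ((∫ s in Ioc a b, ‖P s‖ ^ 2) + (∫ s in Ioc a b, ‖Q s‖ ^ 2) +
        ∫ s in Ioc a b, ∑ n ∈ t, ‖C n s‖ ^ 2) := by
  have boundP := sum_sq_norm_integral_schrodingerPhase_mul_le hM hab hP t
  have boundQ := sum_sq_norm_integral_schrodingerPhase_mul_le hM hab hQ t
  have boundC := sum_sq_norm_integral_schrodingerPhase_mul_family_le
    (by positivity) ((le_div_iff₀' Real.pi_pos).2 hab) hC t
  calc _ ≤ ∑ n ∈ t, 3 * (‖∫ s in Ioc a b, schrodingerPhase n s * P s‖ ^ 2 +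
          ‖∫ s in Ioc a b, schrodingerPhase n s * Q s‖ ^ 2 +
          ‖∫ s in Ioc a b, schrodingerPhase n s * C n s‖ ^ 2) := by
        refine Finset.sum_le_sum fun n _ => ?_
        rw [integral_schrodingerPhase_mul_alternating_sub (hP.integrable one_le_two)
          (hQ.integrable one_le_two) ((hC n).integrable one_le_two)]
        simpa only [norm_mul, norm_pow, norm_neg, norm_one, one_pow, one_mul] using
          sq_norm_sub_sub_le ((-1) ^ (n + 1) * ∫ s in Ioc a b, schrodingerPhase n s * P s)
            (∫ s in Ioc a b, schrodingerPhase n s * Q s)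
            (∫ s in Ioc a b, schrodingerPhase n s * C n s)
    _ ≤ _ := by
        rw [← Finset.mul_sum, Finset.sum_add_distrib, Finset.sum_add_distrib]
        linarith

end SchrodingerPhase

section Smoothing

lemma aestronglyMeasurable_of_alternating_sub {α 𝕜 : Type*} [RCLike 𝕜] {m : MeasurableSpace α}
    {μ : Measure α} {P Q : α → 𝕜} {C : ℕ → α → 𝕜}
    (hB : ∀ n, AEStronglyMeasurable (fun s => (-1) ^ (n + 1) * P s - Q s - C n s) μ)
    (hC : ∀ᵐ s ∂μ, Tendsto (fun n => C n s) atTop (𝓝 0)) :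
    AEStronglyMeasurable P μ ∧ AEStronglyMeasurable Q μ ∧ ∀ n, AEStronglyMeasurable (C n) μ := by
  have tendsto_even : Tendsto (fun k : ℕ => 2 * k) atTop atTop :=
    tendsto_atTop_mono (fun k => by simp only [id]; omega) tendsto_id
  have tendsto_odd : Tendsto (fun k : ℕ => 2 * k + 1) atTop atTop :=
    tendsto_atTop_mono (fun k => by simp only [id]; omega) tendsto_id
  -- Half the difference and half the sum of consecutive terms isolate `P` and `-Q` in the limit.
  have hP : AEStronglyMeasurable P μ := by
    refine aestronglyMeasurable_of_tendsto_ae atTop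
      (fun k => ((hB (2 * k + 1)).sub (hB (2 * k))).const_mul (1 / 2)) ?_
    filter_upwards [hC] with s hs
    have hlim := ((hs.comp tendsto_even).sub (hs.comp tendsto_odd)).const_mul (1 / 2)
    convert hlim.const_add (P s) using 2 with k
    · simp only [Pi.sub_apply, Function.comp_apply, pow_succ, pow_mul]
      ring
    · simp
  have hQ : AEStronglyMeasurable Q μ := by
    refine aestronglyMeasurable_of_tendsto_ae atTop
      (fun k => ((hB (2 * k + 1)).add (hB (2 * k))).const_mul (-1 / 2)) ?_
    filter_upwards [hC] with s hs
    have hlim := ((hs.comp tendsto_even).add (hs.comp tendsto_odd)).const_mul (1 / 2)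
    convert hlim.const_add (Q s) using 2 with k
    · simp only [Pi.add_apply, Function.comp_apply, pow_succ, pow_mul]
      ring
    · simp
  refine ⟨hP, hQ, fun n => ?_⟩
  convert ((hP.const_mul ((-1) ^ (n + 1))).sub hQ).sub (hB n) using 1
  ext s
  simp

lemma memLp_two_of_sq_norm_le {α E : Type*} [NormedAddCommGroup E] {m : MeasurableSpace α}
    {μ : Measure α} {u : α → E} {S : α → ℝ} (hu : AEStronglyMeasurable u μ)
    (hS : Integrable S μ) (hle : ∀ᵐ s ∂μ, ‖u s‖ ^ 2 ≤ S s) : MemLp u 2 μ :=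
  (memLp_two_iff_integrable_sq_norm hu).2 <| hS.mono' (hu.norm.pow 2) <| by
    filter_upwards [hle] with s hs
    rwa [Real.norm_of_nonneg (by positivity)]

variable {f D1 D2 D3 : ℝ → ℝ → ℂ} {a b : ℝ} {n : ℕ}

lemma memLp_second_traces_and_cosCoef_third
    (hreg : ∀ s ∈ Ioc a b, IsC3Dirichlet (f s) (D1 s) (D2 s) (D3 s))
    (hA : ∀ n, AEStronglyMeasurable (coefA f n) (volume.restrict (Ioc a b)))
    (hS : IntegrableOn (sobNormSq f D1 D2 D3) (Ioc a b)) :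
    MemLp (fun s => D2 s 1) 2 (volume.restrict (Ioc a b)) ∧
      MemLp (fun s => D2 s 0) 2 (volume.restrict (Ioc a b)) ∧
        ∀ n, MemLp (fun s => cosCoef (D3 s) n) 2 (volume.restrict (Ioc a b)) := by
  have ae_of_reg {p : ℝ → Prop} (hp : ∀ s, IsC3Dirichlet (f s) (D1 s) (D2 s) (D3 s) → p s) :
      ∀ᵐ s ∂volume.restrict (Ioc a b), p s :=
    ae_restrict_of_forall_mem measurableSet_Ioc fun s hs => hp s (hreg s hs)
  obtain ⟨hP, hQ, hC⟩ := aestronglyMeasurable_of_alternating_sub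
    (μ := volume.restrict (Ioc a b)) (P := fun s => D2 s 1) (Q := fun s => D2 s 0)
    (C := fun n s => cosCoef (D3 s) n)
    (fun n => ((hA n).const_mul ((√2 : ℂ)⁻¹ * ((((n + 1) * Real.pi) ^ 3 : ℝ) : ℂ))).congr <|
      ae_of_reg fun s h => by
        simp only [mul_assoc, h.cube_mul_coefA n, inv_mul_cancel_left₀ (show (√2 : ℂ) ≠ 0 by simp)])
    (ae_of_reg fun s h => tendsto_cosCoef_atTop
      (memLp_Ioc_of_continuousOn_Icc h.continuousOn_third 2))
  have hS2 := hS.const_mul 2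
  exact ⟨memLp_two_of_sq_norm_le hP hS2 <| ae_of_reg fun s h => h.sq_norm_second_le (by simp),
    memLp_two_of_sq_norm_le hQ hS2 <| ae_of_reg fun s h => h.sq_norm_second_le (by simp),
    fun n => memLp_two_of_sq_norm_le (hC n) hS2 <| ae_of_reg fun s h => by
      simpa using h.sum_sq_norm_cosCoef_third_le {n}⟩

lemma sq_norm_integral_schrodingerPhase_mul_coefA
    (hreg : ∀ s ∈ Ioc a b, IsC3Dirichlet (f s) (D1 s) (D2 s) (D3 s)) (n : ℕ) :
    ((n + 1) * Real.pi) ^ 6 * ‖∫ s in Ioc a b, schrodingerPhase n s * coefA f n s‖ ^ 2 =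
      2 * ‖∫ s in Ioc a b, schrodingerPhase n s *
        ((-1) ^ (n + 1) * D2 s 1 - D2 s 0 - cosCoef (D3 s) n)‖ ^ 2 := by
  have by_parts : ((((n + 1) * Real.pi) ^ 3 : ℝ) : ℂ) *
      (∫ s in Ioc a b, schrodingerPhase n s * coefA f n s) =
        √2 * ∫ s in Ioc a b, schrodingerPhase n s *
          ((-1) ^ (n + 1) * D2 s 1 - D2 s 0 - cosCoef (D3 s) n) := by
    simp_rw [← integral_const_mul]
    refine setIntegral_congr_fun measurableSet_Ioc fun s hs => ?_
    simp only [mul_left_comm _ (schrodingerPhase n s), (hreg s hs).cube_mul_coefA n]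
  have hsq := congrArg (fun z => ‖z‖ ^ 2) by_parts
  simp only [norm_mul, mul_pow _ _ 2, Complex.norm_real, Real.norm_eq_abs, sq_abs] at hsq
  rwa [← pow_mul, Real.sq_sqrt zero_le_two] at hsq

lemma sum_sq_norm_integral_schrodingerPhase_mul_coefA_le {M : ℕ} (hM : 0 < M)
    (hab : Real.pi * (b - a) ≤ 2 * M)
    (hreg : ∀ s ∈ Ioc a b, IsC3Dirichlet (f s) (D1 s) (D2 s) (D3 s))
    (hA : ∀ n, AEStronglyMeasurable (coefA f n) (volume.restrict (Ioc a b)))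
    (hS : IntegrableOn (sobNormSq f D1 D2 D3) (Ioc a b)) (t : Finset ℕ) :
    ∑ n ∈ t, ((n + 1) * Real.pi) ^ 6 *
        ‖∫ s in Ioc a b, schrodingerPhase n s * coefA f n s‖ ^ 2 ≤
      36 * (2 * M / Real.pi) * ∫ s in Ioc a b, sobNormSq f D1 D2 D3 s := by
  obtain ⟨hP, hQ, hC⟩ := memLp_second_traces_and_cosCoef_third hreg hA hS
  have two_sob {φ : ℝ → ℝ} (hφ : ∀ s, 0 ≤ φ s)
      (hle : ∀ s ∈ Ioc a b, φ s ≤ 2 * sobNormSq f D1 D2 D3 s) :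
      ∫ s in Ioc a b, φ s ≤ 2 * ∫ s in Ioc a b, sobNormSq f D1 D2 D3 s := by
    rw [← integral_const_mul]
    exact integral_mono_of_nonneg (ae_of_all _ hφ) (hS.const_mul 2)
      (ae_restrict_of_forall_mem measurableSet_Ioc hle)
  have boundP := two_sob (fun s => sq_nonneg ‖D2 s 1‖) fun s hs =>
    (hreg s hs).sq_norm_second_le (by simp)
  have boundQ := two_sob (fun s => sq_nonneg ‖D2 s 0‖) fun s hs =>
    (hreg s hs).sq_norm_second_le (by simp)
  have boundC := two_sob (φ := fun s => ∑ n ∈ t, ‖cosCoef (D3 s) n‖ ^ 2)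
    (fun s => by positivity) fun s hs => (hreg s hs).sum_sq_norm_cosCoef_third_le t
  simp_rw [sq_norm_integral_schrodingerPhase_mul_coefA hreg, ← Finset.mul_sum]
  calc _ ≤ 2 * (3 * (2 * M / Real.pi) * ((∫ s in Ioc a b, ‖D2 s 1‖ ^ 2) +
          (∫ s in Ioc a b, ‖D2 s 0‖ ^ 2) +
            ∫ s in Ioc a b, ∑ n ∈ t, ‖cosCoef (D3 s) n‖ ^ 2)) := by
        gcongr
        exact sum_sq_norm_integral_schrodingerPhase_mul_alternating_sub_le hM hab hP hQ hC t
    _ ≤ 2 * (3 * (2 * M / Real.pi) * (2 * (∫ s in Ioc a b, sobNormSq f D1 D2 D3 s) +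
          2 * (∫ s in Ioc a b, sobNormSq f D1 D2 D3 s) +
            2 * ∫ s in Ioc a b, sobNormSq f D1 D2 D3 s)) := by gcongr
    _ = 36 * (2 * M / Real.pi) * ∫ s in Ioc a b, sobNormSq f D1 D2 D3 s := by ring

/-- The constant `c₁(T)` of the smoothing estimate. The integer `M = 2⌈T⌉₊ + 1` satisfies
`πT ≤ 2M`, so that `(0, T)` fits in one period `2M/π`, and `36 · 2M/π ≤ 36 M`. -/
noncomputable def smoothingConst (T : ℝ) : ℝ := 6 * √(2 * ⌈T⌉₊ + 1)

lemma smoothingConst_pos (T : ℝ) : 0 < smoothingConst T := by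
  unfold smoothingConst
  positivity

lemma monotone_smoothingConst : Monotone smoothingConst := fun x y hxy => by
  have hceil : (⌈x⌉₊ : ℝ) ≤ ⌈y⌉₊ := by exact_mod_cast Nat.ceil_mono hxy
  unfold smoothingConst
  gcongr

lemma mul_two_mul_div_pi_le_sq_smoothingConst (T : ℝ) :
    36 * (2 * (2 * ⌈T⌉₊ + 1 : ℕ) / Real.pi) ≤ smoothingConst T ^ 2 := by
  have hdiv : 2 * (2 * (⌈T⌉₊ : ℝ) + 1) / Real.pi ≤ 2 * ⌈T⌉₊ + 1 := by
    rw [div_le_iff₀ Real.pi_pos]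
    nlinarith [Real.pi_gt_three, (⌈T⌉₊.cast_nonneg : (0 : ℝ) ≤ ⌈T⌉₊)]
  rw [smoothingConst, mul_pow, Real.sq_sqrt (by positivity)]
  push_cast
  linarith

lemma coefG_sub_coefG (h0a : IntervalIntegrable (coefA f n) volume 0 a)
    (h0b : IntervalIntegrable (coefA f n) volume 0 b) :
    coefG f n b - coefG f n a = ∫ s in a..b, schrodingerPhase n s * coefA f n s := by
  have integrable {c : ℝ} (h : IntervalIntegrable (coefA f n) volume 0 c) :
      IntervalIntegrable (fun s => schrodingerPhase n s * coefA f n s) volume 0 c :=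
    h.continuousOn_mul (continuous_schrodingerPhase n).continuousOn
  exact intervalIntegral.integral_interval_sub_left (integrable h0b) (integrable h0a)

lemma sum_sq_norm_coefG_sub_le {T : ℝ}
    (hreg : ∀ s ∈ Icc 0 T, IsC3Dirichlet (f s) (D1 s) (D2 s) (D3 s))
    (hA : ∀ n, IntervalIntegrable (coefA f n) volume 0 T)
    (hS : IntervalIntegrable (sobNormSq f D1 D2 D3) volume 0 T)
    (ha : a ∈ Icc 0 T) (hb : b ∈ Icc 0 T) (t : Finset ℕ) :
    ∑ n ∈ t, ((n + 1) * Real.pi) ^ 6 * ‖coefG f n b - coefG f n a‖ ^ 2 ≤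
      smoothingConst T ^ 2 * |∫ s in a..b, sobNormSq f D1 D2 D3 s| := by
  wlog hab : a ≤ b generalizing a b
  · simpa only [norm_sub_rev, intervalIntegral.integral_symm a b, abs_neg] using
      this hb ha (le_of_not_ge hab)
  have hT : uIcc 0 T = Icc 0 T := uIcc_of_le (ha.1.trans ha.2)
  rw [← hT] at ha hb
  have increment (n : ℕ) : coefG f n b - coefG f n a =
      ∫ s in Ioc a b, schrodingerPhase n s * coefA f n s := by
    rw [coefG_sub_coefG ((hA n).mono_set (uIcc_subset_uIcc left_mem_uIcc ha))
      ((hA n).mono_set (uIcc_subset_uIcc left_mem_uIcc hb)), intervalIntegral.integral_of_le hab]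
  have hSab := (hS.mono_set (uIcc_subset_uIcc ha hb)).1
  have hAab (n : ℕ) := ((hA n).mono_set (uIcc_subset_uIcc ha hb)).1.1
  rw [hT] at ha hb
  have period : Real.pi * (b - a) ≤ 2 * (2 * ⌈T⌉₊ + 1 : ℕ) := by
    push_cast
    nlinarith [Real.pi_le_four, Real.pi_pos, ha.1, hb.2, Nat.le_ceil T]
  simp_rw [increment]
  rw [intervalIntegral.integral_of_le hab,
    abs_of_nonneg (integral_nonneg (sobNormSq_nonneg f D1 D2 D3))]
  refine (sum_sq_norm_integral_schrodingerPhase_mul_coefA_le (Nat.succ_pos _) period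
    (fun s hs => hreg s ⟨ha.1.trans hs.1.le, hs.2.trans hb.2⟩) hAab hSab t).trans ?_
  gcongr
  · exact integral_nonneg (sobNormSq_nonneg f D1 D2 D3)
  · exact mul_two_mul_div_pi_le_sq_smoothingConst T

lemma sum_sq_norm_coefG_le {T r : ℝ}
    (hreg : ∀ s ∈ Icc 0 T, IsC3Dirichlet (f s) (D1 s) (D2 s) (D3 s))
    (hA : ∀ n, IntervalIntegrable (coefA f n) volume 0 T)
    (hS : IntervalIntegrable (sobNormSq f D1 D2 D3) volume 0 T)
    (hr : r ∈ Icc 0 T) (t : Finset ℕ) :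
    ∑ n ∈ t, ((n + 1) * Real.pi) ^ 6 * ‖coefG f n r‖ ^ 2 ≤
      smoothingConst T ^ 2 * ∫ s in (0 : ℝ)..T, sobNormSq f D1 D2 D3 s := by
  have hmono := intervalIntegral.integral_mono_interval le_rfl hr.1 hr.2
    (ae_of_all _ (sobNormSq_nonneg f D1 D2 D3)) hS
  have hpos : 0 ≤ ∫ s in (0 : ℝ)..r, sobNormSq f D1 D2 D3 s :=
    intervalIntegral.integral_nonneg_of_forall hr.1 (sobNormSq_nonneg f D1 D2 D3)
  have from_zero := sum_sq_norm_coefG_sub_le hreg hA hS (left_mem_Icc.2 (hr.1.trans hr.2)) hr t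
  have coefG_zero (n : ℕ) : coefG f n 0 = 0 := intervalIntegral.integral_same
  simp only [coefG_zero, sub_zero, abs_of_nonneg hpos] at from_zero
  exact from_zero.trans (by gcongr)

lemma exists_pos_forall_norm_integral_lt {E : Type*} [NormedAddCommGroup E] [NormedSpace ℝ E]
    {g : ℝ → E} {T t ε : ℝ} (hg : IntervalIntegrable g volume 0 T) (ht : t ∈ Icc 0 T)
    (hε : 0 < ε) :
    ∃ δ > 0, ∀ t' ∈ Icc 0 T, |t' - t| < δ → ‖∫ s in t..t', g s‖ < ε := by
  have hIcc : uIcc 0 T = Icc 0 T := uIcc_of_le (ht.1.trans ht.2)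
  have hcont := intervalIntegral.continuousOn_primitive_interval' hg left_mem_uIcc
  rw [hIcc] at hcont
  obtain ⟨δ, hδ, hclose⟩ := Metric.continuousOn_iff.1 hcont t ht ε hε
  refine ⟨δ, hδ, fun t' ht' htt' => ?_⟩
  have hsub {x : ℝ} (hx : x ∈ Icc 0 T) : IntervalIntegrable g volume 0 x :=
    hg.mono_set (uIcc_subset_uIcc left_mem_uIcc (hIcc ▸ hx))
  rw [← intervalIntegral.integral_interval_sub_left (hsub ht') (hsub ht), ← dist_eq_norm]
  exact hclose t' ht' htt'

end Smoothing

/-- smoothing lemma: for `f ∈ L²((0,T), H³ ∩ H¹₀)`, the function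
`G(t) = ∫₀ᵗ e^{iAs} f(s) ds` belongs to `C⁰([0,T], H³₍₀₎)` — expressed through the
eigencoefficients: `‖G(t)‖²_{H³₍₀₎} = ∑ ((n+1)π)⁶ ‖coefG n t‖²` is finite,
bounded by `c₁(T)² ‖f‖²_{L²((0,T),H³∩H¹₀)}`, and continuous in `t` in the `H³₍₀₎` sense,
with `c₁` monotone (hence uniformly bounded on bounded intervals of `T`). -/
theorem stmt_19 :
    ∃ c : ℝ → ℝ, (∀ T, 0 < c T) ∧ Monotone c ∧
      ∀ (T : ℝ), 0 < T → ∀ (f D1 D2 D3 : ℝ → ℝ → ℂ),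
        (∀ s ∈ Set.Icc (0:ℝ) T, ∀ x ∈ Set.Icc (0:ℝ) 1,
          HasDerivAt (f s) (D1 s x) x ∧ HasDerivAt (D1 s) (D2 s x) x ∧
          HasDerivAt (D2 s) (D3 s x) x) →
        (∀ s ∈ Set.Icc (0:ℝ) T,
          ContinuousOn (D3 s) (Set.Icc 0 1) ∧ f s 0 = 0 ∧ f s 1 = 0) →
        (∀ n : ℕ, IntervalIntegrable (coefA f n) MeasureTheory.volume 0 T) →
        IntervalIntegrable (sobNormSq f D1 D2 D3) MeasureTheory.volume 0 T →
        (∀ t ∈ Set.Icc (0:ℝ) T,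
          Summable (fun n : ℕ => (((n : ℝ) + 1) * Real.pi) ^ 6 * ‖coefG f n t‖ ^ 2)) ∧
        (∀ t ∈ Set.Icc (0:ℝ) T,
          (∑' n : ℕ, (((n : ℝ) + 1) * Real.pi) ^ 6 * ‖coefG f n t‖ ^ 2) ≤
            (c T) ^ 2 * ∫ s in (0:ℝ)..T, sobNormSq f D1 D2 D3 s) ∧
        (∀ t ∈ Set.Icc (0:ℝ) T, ∀ ε : ℝ, 0 < ε → ∃ δ : ℝ, 0 < δ ∧
          ∀ t' ∈ Set.Icc (0:ℝ) T, |t' - t| < δ →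
            (∑' n : ℕ, (((n : ℝ) + 1) * Real.pi) ^ 6 *
              ‖coefG f n t' - coefG f n t‖ ^ 2) < ε) := by
  refine ⟨smoothingConst, smoothingConst_pos, monotone_smoothingConst, ?_⟩
  intro T _ f D1 D2 D3 hderiv hbdry hA hS
  have hreg (s : ℝ) (hs : s ∈ Icc 0 T) : IsC3Dirichlet (f s) (D1 s) (D2 s) (D3 s) :=
    ⟨fun x hx => (hderiv s hs x hx).1, fun x hx => (hderiv s hs x hx).2.1,
      fun x hx => (hderiv s hs x hx).2.2, (hbdry s hs).1, (hbdry s hs).2.1, (hbdry s hs).2.2⟩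
  refine ⟨fun t ht => summable_of_sum_le (fun n => by positivity)
      (sum_sq_norm_coefG_le hreg hA hS ht),
    fun t ht => Real.tsum_le_of_sum_le (fun n => by positivity)
      (sum_sq_norm_coefG_le hreg hA hS ht),
    fun t ht ε hε => ?_⟩
  have hK : 0 < smoothingConst T ^ 2 := pow_pos (smoothingConst_pos T) 2
  obtain ⟨δ, hδ, hclose⟩ := exists_pos_forall_norm_integral_lt hS ht (div_pos hε hK)
  refine ⟨δ, hδ, fun t' ht' htt' => ?_⟩
  calc _ ≤ smoothingConst T ^ 2 * |∫ s in t..t', sobNormSq f D1 D2 D3 s| :=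
        Real.tsum_le_of_sum_le (fun n => by positivity)
          (sum_sq_norm_coefG_sub_le hreg hA hS ht ht')
    _ < ε := (lt_div_iff₀' hK).1 (hclose t' ht' htt')
end
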